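/- arXiv:1208.2527 — 2 statements merged into one kernel-verified Lean document; each statement's English description precedes it below -/
import Mathlib

section
/- For fractional Brownian motion $B^H$ with Hurst parameter $H \in [1/2,1)$ on $[0,a]$, the expected supremum satisfies $\frac{\sqrt{2}\,a^H}{2\sqrt{\pi}} \le E[\sup_{0\le v\le a} B^H_v] \le \frac{\sqrt{2}\,a^H}{\sqrt{\pi}}$. -/
open MeasureTheory ProbabilityTheory Real Set Filter

/-- A (standard) fractional Brownian motion with Hurst parameter `H`:
a continuous centered Gaussian process started at `0` with the fBm covariance. -/
structure IsFBM {Ω : Type*} [MeasurableSpace Ω] (P : Measure Ω) (H : ℝ)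
    (B : ℝ → Ω → ℝ) : Prop where
  measurable : ∀ t, Measurable (B t)
  gaussian : ∀ (n : ℕ) (t : Fin n → ℝ) (c : Fin n → ℝ),
    ∃ v : NNReal, P.map (fun ω => ∑ i, c i * B (t i) ω) = gaussianReal 0 v
  zero : ∀ ω, B 0 ω = 0
  cov : ∀ s t : ℝ, 0 ≤ s → 0 ≤ t →
    ∫ ω, B s ω * B t ω ∂P = (s ^ (2*H) + t ^ (2*H) - |t - s| ^ (2*H)) / 2
  cont : ∀ ω, Continuous fun t => B t ω

/-- Running supremum `S_a = sup_{0 ≤ v ≤ a} B_v`. -/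
noncomputable def fbmSup {Ω : Type*} (B : ℝ → Ω → ℝ) (a : ℝ) (ω : Ω) : ℝ :=
  sSup ((fun v => B v ω) '' Set.Icc 0 a)

/-- Running infimum `I_a = inf_{0 ≤ v ≤ a} B_v`. -/
noncomputable def fbmInf {Ω : Type*} (B : ℝ → Ω → ℝ) (a : ℝ) (ω : Ω) : ℝ :=
  sInf ((fun v => B v ω) '' Set.Icc 0 a)

/-- Maximum loss `M_a = sup_{0 ≤ u ≤ v ≤ a} (B_u - B_v)`. -/
noncomputable def fbmMaxLoss {Ω : Type*} (B : ℝ → Ω → ℝ) (a : ℝ) (ω : Ω) : ℝ :=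
  sSup {x | ∃ u v : ℝ, 0 ≤ u ∧ u ≤ v ∧ v ≤ a ∧ x = B u ω - B v ω}

/-!
For `H ≥ 1/2` the increment variance `|s - t| ^ (2 * H)` of `B` on `[0, 1]` is at most `|s - t|`,
the increment variance of a Brownian motion. By the Sudakov–Fernique inequality the expected
maximum of `B` over a uniform grid is therefore at most that of a Gaussian random walk `S` with the
matching step variance. A form of Lévy's maximal inequality bounds the latter by the expected
absolute value of the endpoint of `S`, which is the half-normal mean `√(2 / π)` up to scaling, and
refining the grid gives the upper bound by continuity of the paths and Fatou's lemma.

The Sudakov–Fernique inequality comes from Gaussian integration by parts along the rotation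
`cos θ • X + sin θ • Y` of two independent Gaussian vectors: the derivative in `θ` of the expected
log-sum-exp is `sin θ * cos θ` times a nonnegative combination of differences of increment
variances.

The lower bound keeps only the times `0` and `a`, where the maximum is the positive part of the
Gaussian variable `B a`.
-/

section GaussianReal

variable {μ : ℝ} {v : NNReal}

lemma hasDerivAt_gaussianPDFReal (μ : ℝ) (v : NNReal) (x : ℝ) :
    HasDerivAt (gaussianPDFReal μ v) (-((x - μ) / v) * gaussianPDFReal μ v x) x := by
  have hexponent : HasDerivAt (fun y : ℝ ↦ -(y - μ) ^ 2 / (2 * (v : ℝ))) (-((x - μ) / v)) x := by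
    refine ((((hasDerivAt_id x).sub_const μ).pow 2).neg.div_const (2 * (v : ℝ))).congr_deriv ?_
    simp only [id, Nat.cast_ofNat]
    ring
  rw [gaussianPDFReal_def]
  exact (hexponent.exp.const_mul (√(2 * π * v))⁻¹).congr_deriv (by ring)

lemma tendsto_gaussianPDFReal_atTop (μ : ℝ) (v : NNReal) :
    Tendsto (gaussianPDFReal μ v) atTop (nhds 0) := by
  rcases eq_or_ne v 0 with rfl | hv
  · simp only [gaussianPDFReal_zero_var]
    exact tendsto_const_nhds
  have hexponent : Tendsto (fun x : ℝ ↦ (x - μ) ^ 2 / (2 * (v : ℝ))) atTop atTop :=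
    ((tendsto_pow_atTop two_ne_zero).comp
      (tendsto_atTop_add_const_right _ (-μ) tendsto_id)).atTop_div_const (by positivity)
  have hexp := (tendsto_exp_neg_atTop_nhds_zero.comp hexponent).const_mul (√(2 * π * v))⁻¹
  rw [gaussianPDFReal_def]
  simpa only [Function.comp_def, neg_div, mul_zero] using hexp

lemma integrable_gaussianReal_iff (hv : v ≠ 0) {f : ℝ → ℝ} :
    Integrable f (gaussianReal μ v) ↔ Integrable fun x ↦ gaussianPDFReal μ v x * f x := by
  rw [gaussianReal_of_var_ne_zero _ hv, integrable_withDensity_iff_integrable_smul₀']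
  · simp only [toReal_gaussianPDF, smul_eq_mul]
  · fun_prop
  · exact ae_of_all _ fun _ ↦ ENNReal.ofReal_lt_top

theorem integral_sub_mul_gaussianReal {h h' : ℝ → ℝ} (hderiv : ∀ x, HasDerivAt h (h' x) x)
    (hint : Integrable h (gaussianReal μ v)) (hint' : Integrable h' (gaussianReal μ v))
    (hmul : Integrable (fun x ↦ (x - μ) * h x) (gaussianReal μ v)) :
    ∫ x, (x - μ) * h x ∂gaussianReal μ v = v * ∫ x, h' x ∂gaussianReal μ v := by
  rcases eq_or_ne v 0 with rfl | hv
  · simp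
  have hv' : (v : ℝ) ≠ 0 := NNReal.coe_ne_zero.mpr hv
  rw [integrable_gaussianReal_iff hv] at hint hint' hmul
  have hparts := integral_mul_deriv_eq_deriv_mul_of_integrable
    (fun x _ ↦ hderiv x) (fun x _ ↦ hasDerivAt_gaussianPDFReal μ v x)
    ((hmul.const_mul (-(v : ℝ)⁻¹)).congr (ae_of_all _ fun x ↦ by simp only [Pi.mul_apply]; ring))
    (hint'.congr (ae_of_all _ fun x ↦ mul_comm _ _))
    (hint.congr (ae_of_all _ fun x ↦ mul_comm _ _))
  simp only [integral_gaussianReal_eq_integral_smul hv, smul_eq_mul]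
  calc ∫ x, gaussianPDFReal μ v x * ((x - μ) * h x)
      = -v * ∫ x, h x * (-((x - μ) / v) * gaussianPDFReal μ v x) := by
        rw [← integral_const_mul]
        congr with x
        field_simp
    _ = v * ∫ x, gaussianPDFReal μ v x * h' x := by
        rw [hparts]
        simp only [mul_comm (h' _), neg_mul_neg]

lemma integral_Ioi_sub_mul_gaussianPDFReal (μ : ℝ) (v : NNReal) {a : ℝ} (ha : μ ≤ a) :
    ∫ x in Ioi a, (x - μ) * gaussianPDFReal μ v x = v * gaussianPDFReal μ v a := by
  rcases eq_or_ne v 0 with rfl | hv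
  · simp
  have hv' : (v : ℝ) ≠ 0 := NNReal.coe_ne_zero.mpr hv
  rw [integral_Ioi_of_hasDerivAt_of_nonneg' (g := fun x ↦ -v * gaussianPDFReal μ v x) (l := 0)]
  · ring
  · exact fun x _ ↦ ((hasDerivAt_gaussianPDFReal μ v x).const_mul (-(v : ℝ))).congr_deriv
      (by field_simp)
  · exact fun x hx ↦ mul_nonneg (sub_nonneg.mpr (ha.trans (le_of_lt hx)))
      (gaussianPDFReal_nonneg μ v x)
  · simpa using (tendsto_gaussianPDFReal_atTop μ v).const_mul (-(v : ℝ))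

lemma integral_abs_gaussianReal (v : NNReal) :
    ∫ x, |x| ∂gaussianReal 0 v = √(2 * v / π) := by
  rcases eq_or_ne v 0 with rfl | hv
  · simp
  calc ∫ x, |x| ∂gaussianReal 0 v
      = ∫ x, (fun y ↦ (y - 0) * gaussianPDFReal 0 v y) |x| := by
        rw [integral_gaussianReal_eq_integral_smul hv]
        simp [gaussianPDFReal, mul_comm]
    _ = 2 * (v * gaussianPDFReal 0 v 0) := by
        rw [integral_comp_abs (f := fun y ↦ (y - 0) * gaussianPDFReal 0 v y),
          integral_Ioi_sub_mul_gaussianPDFReal 0 v le_rfl]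
    _ = √(2 * v / π) := by
        rw [eq_comm, Real.sqrt_eq_iff_eq_sq (by positivity)
          (mul_nonneg zero_le_two (mul_nonneg v.coe_nonneg (gaussianPDFReal_nonneg _ _ _)))]
        have hv' : (v : ℝ) ≠ 0 := NNReal.coe_ne_zero.mpr hv
        simp only [gaussianPDFReal, sub_self, ne_eq, OfNat.ofNat_ne_zero, not_false_eq_true,
          zero_pow, neg_zero, zero_div, exp_zero, mul_one, mul_pow, inv_pow,
          Real.sq_sqrt (show 0 ≤ 2 * π * (v : ℝ) by positivity)]
        field_simp

end GaussianReal

section GaussianIntegrationByParts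

variable {Ω : Type*} [MeasurableSpace Ω] {P : Measure Ω}

section Product

variable {α β : Type*} [MeasurableSpace α] [MeasurableSpace β] [IsFiniteMeasure P]
  {X : Ω → α} {Y : Ω → β}

lemma integrable_prod_map_of_indepFun (hX : AEMeasurable X P) (hY : AEMeasurable Y P)
    (hXY : X ⟂ᵢ[P] Y) {f : α × β → ℝ} (hf : Measurable f)
    (hint : Integrable (fun ω ↦ f (X ω, Y ω)) P) : Integrable f ((P.map X).prod (P.map Y)) := by
  rwa [← (indepFun_iff_map_prod_eq_prod_map_map hX hY).mp hXY,
    integrable_map_measure hf.aestronglyMeasurable (hX.prodMk hY)]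

lemma integral_comp_prodMk_of_indepFun (hX : AEMeasurable X P) (hY : AEMeasurable Y P)
    (hXY : X ⟂ᵢ[P] Y) {f : α × β → ℝ} (hf : Measurable f)
    (hint : Integrable (fun ω ↦ f (X ω, Y ω)) P) :
    ∫ ω, f (X ω, Y ω) ∂P = ∫ x, ∫ y, f (x, y) ∂P.map Y ∂P.map X := by
  rw [← integral_prod _ (integrable_prod_map_of_indepFun hX hY hXY hf hint),
    ← (indepFun_iff_map_prod_eq_prod_map_map hX hY).mp hXY,
    integral_map (hX.prodMk hY) hf.aestronglyMeasurable]

end Product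

variable {E : Type*} [NormedAddCommGroup E] [NormedSpace ℝ E]
  [SecondCountableTopology E] [MeasurableSpace E] [BorelSpace E]

lemma integral_mul_comp_add_smul_of_indepFun [IsProbabilityMeasure P] {W : Ω → E} {U : Ω → ℝ}
    {v : NNReal} (hW : AEMeasurable W P) (hU : AEMeasurable U P)
    (hlaw : P.map U = gaussianReal 0 v) (hWU : W ⟂ᵢ[P] U) (k : E) {F : E → ℝ}
    (hF : Differentiable ℝ F) {C : ℝ} (hC : ∀ z, |F z| ≤ C) {C' : ℝ}
    (hC' : ∀ z, ‖fderiv ℝ F z‖ ≤ C') :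
    ∫ ω, U ω * F (W ω + U ω • k) ∂P = v * ∫ ω, fderiv ℝ F (W ω + U ω • k) k ∂P := by
  have hFm := hF.continuous.measurable
  have hF'm := measurable_fderiv_apply_const ℝ F k
  have hF'C (z : E) : ‖fderiv ℝ F z k‖ ≤ C' * ‖k‖ := (fderiv ℝ F z).le_of_opNorm_le (hC' z) k
  have hid : Integrable id (gaussianReal 0 v) :=
    memLp_one_iff_integrable.mp (memLp_id_gaussianReal 1)
  have hUint : Integrable U P := by
    rw [← hlaw] at hid
    exact (integrable_map_measure aestronglyMeasurable_id hU).mp hid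
  have hZm : AEMeasurable (fun ω ↦ W ω + U ω • k) P := hW.add (hU.smul_const k)
  rw [integral_comp_prodMk_of_indepFun hW hU hWU (f := fun p ↦ p.2 * F (p.1 + p.2 • k))
      (by fun_prop)
      (hUint.mul_bdd (hFm.comp_aemeasurable hZm).aestronglyMeasurable
        (ae_of_all _ fun _ ↦ hC _)),
    integral_comp_prodMk_of_indepFun hW hU hWU (f := fun p ↦ fderiv ℝ F (p.1 + p.2 • k) k)
      (hF'm.comp (by fun_prop))
      (.of_bound (hF'm.comp_aemeasurable hZm).aestronglyMeasurable _
        (ae_of_all _ fun _ ↦ hF'C _)),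
    hlaw, ← integral_const_mul]
  congr with w
  have hderiv (u : ℝ) :
      HasDerivAt (fun u : ℝ ↦ F (w + u • k)) (fderiv ℝ F (w + u • k) k) u := by
    refine (hF _).hasFDerivAt.comp_hasDerivAt u ?_
    simpa using ((hasDerivAt_id u).smul_const k).const_add w
  have hcomp : Measurable fun u : ℝ ↦ F (w + u • k) := hFm.comp (by fun_prop)
  simpa using integral_sub_mul_gaussianReal (μ := 0) hderiv
    (.of_bound hcomp.aestronglyMeasurable C (ae_of_all _ fun _ ↦ hC _))
    (.of_bound (hF'm.comp (by fun_prop)).aestronglyMeasurable _ (ae_of_all _ fun _ ↦ hF'C _))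
    (by simpa using hid.mul_bdd hcomp.aestronglyMeasurable (ae_of_all _ fun _ ↦ hC _))

variable [CompleteSpace E]

lemma indepFun_sub_smul_of_hasGaussianLaw {Z : Ω → E} {U : Ω → ℝ}
    (hZU : HasGaussianLaw (fun ω ↦ (Z ω, U ω)) P) {k : E}
    (hk : ∀ L : StrongDual ℝ E, cov[L ∘ Z, U; P] = Var[U; P] * L k) :
    (fun ω ↦ Z ω - U ω • k) ⟂ᵢ[P] U := by
  have := hZU.isProbabilityMeasure
  let T : E × ℝ →L[ℝ] E × ℝ :=
    ((ContinuousLinearMap.fst ℝ E ℝ) -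
      (ContinuousLinearMap.snd ℝ E ℝ).smulRight k).prod (ContinuousLinearMap.snd ℝ E ℝ)
  refine HasGaussianLaw.indepFun_of_covariance_strongDual (hZU.map_fun T) fun L L' ↦ ?_
  have hU : MemLp U 2 P := hZU.snd.memLp_two
  have hLZ : MemLp (L ∘ Z) 2 P := (hZU.fst.map L).memLp_two
  have hleft : L ∘ (fun ω ↦ Z ω - U ω • k) = fun ω ↦ (L ∘ Z) ω - L k * U ω := by
    ext ω; simp [mul_comm]
  have hright : L' ∘ U = fun ω ↦ L' 1 * U ω := by
    ext ω; simpa [mul_comm] using L'.map_smul (U ω) 1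
  rw [hleft, hright, covariance_const_mul_right, covariance_fun_sub_left hLZ (hU.const_mul _) hU,
    covariance_const_mul_left, covariance_self hU.aemeasurable, hk]
  ring

theorem integral_mul_comp_of_hasGaussianLaw {Z : Ω → E} {U : Ω → ℝ}
    (hZU : HasGaussianLaw (fun ω ↦ (Z ω, U ω)) P) (hU0 : P[U] = 0) {F : E → ℝ}
    (hF : Differentiable ℝ F) {C : ℝ} (hC : ∀ z, |F z| ≤ C) {C' : ℝ}
    (hC' : ∀ z, ‖fderiv ℝ F z‖ ≤ C') :
    ∫ ω, U ω * F (Z ω) ∂P = ∫ ω, fderiv ℝ F (Z ω) (∫ ω', U ω' • Z ω' ∂P) ∂P := by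
  have := hZU.isProbabilityMeasure
  have hU : MemLp U 2 P := hZU.snd.memLp_two
  have hZ : MemLp Z 2 P := hZU.fst.memLp_two
  set c := ∫ ω, U ω • Z ω ∂P with hc
  set v := Var[U; P].toNNReal
  have hvar : (v : ℝ) = Var[U; P] := Real.coe_toNNReal _ (variance_nonneg U P)
  have hlaw : P.map U = gaussianReal 0 v := hU0 ▸ hZU.snd.map_eq_gaussianReal
  obtain ⟨k, hk⟩ : ∃ k : E, (v : ℝ) • k = c := by
    rcases eq_or_ne (v : ℝ) 0 with hv0 | hv0
    · have hUz : ∀ᵐ ω ∂P, U ω = 0 := by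
        simpa only [hU0] using ae_eq_integral_of_variance_eq_zero hU (hvar ▸ hv0)
      refine ⟨0, ?_⟩
      rw [smul_zero, hc, integral_eq_zero_of_ae]
      filter_upwards [hUz] with ω hω
      simp [hω]
    · exact ⟨(v : ℝ)⁻¹ • c, smul_inv_smul₀ hv0 c⟩
  have hcov (L : StrongDual ℝ E) : cov[L ∘ Z, U; P] = Var[U; P] * L k := by
    have hLZ : MemLp (L ∘ Z) 2 P := (hZU.fst.map L).memLp_two
    calc cov[L ∘ Z, U; P] = ∫ ω, L (U ω • Z ω) ∂P := by
          rw [covariance_eq_sub hLZ hU, hU0, mul_zero, sub_zero]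
          simp [mul_comm]
      _ = L c := L.integral_comp_comm (memLp_one_iff_integrable.mp (hZ.smul hU))
      _ = Var[U; P] * L k := by rw [← hk, map_smul, hvar, smul_eq_mul]
  have key := integral_mul_comp_add_smul_of_indepFun (hZU.fst.aemeasurable.sub
    (hZU.snd.aemeasurable.smul_const k)) hZU.snd.aemeasurable hlaw
    (indepFun_sub_smul_of_hasGaussianLaw hZU hcov) k hF hC hC'
  have hderiv (z : E) : fderiv ℝ F z c = v * fderiv ℝ F z k := by
    rw [← hk, map_smul, smul_eq_mul]
  simpa only [Pi.sub_apply, sub_add_cancel, hderiv, integral_const_mul] using key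

end GaussianIntegrationByParts

section GaussianInterpolation

variable {Ω : Type*}

lemma integrable_comp_of_lipschitzWith [MeasurableSpace Ω] {P : Measure Ω} [IsFiniteMeasure P]
    {E F : Type*} [NormedAddCommGroup E] [NormedAddCommGroup F] {φ : E → F}
    {K : NNReal} (hφ : LipschitzWith K φ) {f : Ω → E} (hf : Integrable f P) :
    Integrable (fun ω ↦ φ (f ω)) P := by
  have hsub : LipschitzWith K fun z ↦ φ z - φ 0 := by
    simpa only [add_zero] using hφ.sub (LipschitzWith.const (φ 0))
  have hint := memLp_one_iff_integrable.mp
    (hsub.comp_memLp (sub_self _) (memLp_one_iff_integrable.mpr hf))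
  exact (hint.add (integrable_const (φ 0))).congr (ae_of_all _ fun _ ↦ sub_add_cancel _ _)

section NormedSpace

variable {E : Type*} [NormedAddCommGroup E] [NormedSpace ℝ E]

/-- The interpolation `cos θ • X + sin θ • Y` between `X` (at `θ = 0`) and `Y` (at `θ = π / 2`).
Its velocity is its own value at `θ + π / 2`, so that no further notation is needed for
the derivative. -/
noncomputable def trigInterp (X Y : Ω → E) (θ : ℝ) (ω : Ω) : E :=
  cos θ • X ω + sin θ • Y ω

lemma hasDerivAt_trigInterp (X Y : Ω → E) (θ : ℝ) (ω : Ω) :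
    HasDerivAt (fun θ ↦ trigInterp X Y θ ω) (trigInterp X Y (θ + π / 2) ω) θ := by
  simpa only [trigInterp, cos_add_pi_div_two, sin_add_pi_div_two] using
    ((hasDerivAt_cos θ).smul_const (X ω)).fun_add ((hasDerivAt_sin θ).smul_const (Y ω))

lemma norm_trigInterp_le (X Y : Ω → E) (θ : ℝ) (ω : Ω) :
    ‖trigInterp X Y θ ω‖ ≤ ‖X ω‖ + ‖Y ω‖ := by
  refine (norm_add_le _ _).trans (add_le_add ?_ ?_) <;> rw [norm_smul]
  · exact mul_le_of_le_one_left (norm_nonneg _) (abs_cos_le_one θ)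
  · exact mul_le_of_le_one_left (norm_nonneg _) (abs_sin_le_one θ)

variable [MeasurableSpace Ω] {P : Measure Ω}

lemma integrable_trigInterp {X Y : Ω → E} (hX : Integrable X P) (hY : Integrable Y P) (θ : ℝ) :
    Integrable (trigInterp X Y θ) P :=
  (hX.smul (cos θ)).add (hY.smul (sin θ))

theorem hasDerivAt_integral_comp_trigInterp [IsFiniteMeasure P] {X Y : Ω → E}
    (hX : Integrable X P) (hY : Integrable Y P) {φ : E → ℝ} (hφ : ContDiff ℝ 1 φ) {K : NNReal}
    (hφK : LipschitzWith K φ) (θ : ℝ) :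
    HasDerivAt (fun θ ↦ ∫ ω, φ (trigInterp X Y θ ω) ∂P)
      (∫ ω, fderiv ℝ φ (trigInterp X Y θ ω) (trigInterp X Y (θ + π / 2) ω) ∂P) θ := by
  have hmeas (θ : ℝ) : AEStronglyMeasurable (trigInterp X Y θ) P :=
    (integrable_trigInterp hX hY θ).aestronglyMeasurable
  refine (hasDerivAt_integral_of_dominated_loc_of_deriv_le univ_mem
    (F' := fun θ ω ↦ fderiv ℝ φ (trigInterp X Y θ ω) (trigInterp X Y (θ + π / 2) ω))
    (bound := fun ω ↦ K * (‖X ω‖ + ‖Y ω‖))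
    (.of_forall fun θ ↦ hφ.continuous.comp_aestronglyMeasurable (hmeas θ))
    (integrable_comp_of_lipschitzWith hφK (integrable_trigInterp hX hY θ))
    ((hφ.continuous_fderiv_apply one_ne_zero).comp_aestronglyMeasurable
      ((hmeas θ).prodMk (hmeas (θ + π / 2))))
    (ae_of_all _ fun ω θ _ ↦ ?_) ((hX.norm.add hY.norm).const_mul (K : ℝ))
    (ae_of_all _ fun ω θ _ ↦ ?_)).2
  · exact (ContinuousLinearMap.le_of_opNorm_le _ (norm_fderiv_le_of_lipschitz ℝ hφK) _).trans
      (mul_le_mul_of_nonneg_left (norm_trigInterp_le X Y _ ω) K.coe_nonneg)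
  · exact (hφ.differentiable one_ne_zero _).hasFDerivAt.comp_hasDerivAt θ
      (hasDerivAt_trigInterp X Y θ ω)

end NormedSpace

variable [MeasurableSpace Ω] {P : Measure Ω} {ι : Type*} [Fintype ι] {X Y : Ω → ι → ℝ}

/-- Row `i` of the matrix `Cov Y - Cov X`, the direction in which the gradient gets differentiated
when Gaussian integration by parts is applied along `trigInterp X Y`. -/
noncomputable def covarianceGap (P : Measure Ω) (X Y : Ω → ι → ℝ) (i : ι) : ι → ℝ :=
  fun j ↦ cov[(Y · i), (Y · j); P] - cov[(X · i), (X · j); P]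

lemma covariance_trigInterp [IsFiniteMeasure P] (hX : MemLp X 2 P) (hY : MemLp Y 2 P)
    (hXY : X ⟂ᵢ[P] Y) (α β : ℝ) (i j : ι) :
    cov[(trigInterp X Y α · i), (trigInterp X Y β · j); P] =
      cos α * cos β * cov[(X · i), (X · j); P] + sin α * sin β * cov[(Y · i), (Y · j); P] := by
  have hXi (i : ι) (c : ℝ) : MemLp (fun ω ↦ c * X ω i) 2 P := (hX.eval i).const_mul c
  have hYi (i : ι) (c : ℝ) : MemLp (fun ω ↦ c * Y ω i) 2 P := (hY.eval i).const_mul c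
  have hXY0 (i j : ι) : cov[(X · i), (Y · j); P] = 0 :=
    (hXY.comp (measurable_pi_apply i) (measurable_pi_apply j)).covariance_eq_zero
      (hX.eval i) (hY.eval j)
  have hrot (γ : ℝ) (i : ι) : (trigInterp X Y γ · i) =
      (fun ω ↦ cos γ * X ω i) + fun ω ↦ sin γ * Y ω i := rfl
  rw [hrot, hrot, covariance_add_left (hXi i _) (hYi i _) ((hXi j _).add (hYi j _)),
    covariance_add_right (hXi i _) (hXi j _) (hYi j _),
    covariance_add_right (hYi i _) (hXi j _) (hYi j _)]
  simp only [covariance_const_mul_left, covariance_const_mul_right, hXY0,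
    covariance_comm (Y · i) (X · j)]
  ring

lemma integral_trigInterp_apply (hX : Integrable X P) (hY : Integrable Y P)
    (hX0 : ∀ i, ∫ ω, X ω i ∂P = 0) (hY0 : ∀ i, ∫ ω, Y ω i ∂P = 0) (θ : ℝ) (i : ι) :
    ∫ ω, trigInterp X Y θ ω i ∂P = 0 := by
  simp only [trigInterp, Pi.add_apply, Pi.smul_apply, smul_eq_mul]
  rw [integral_add ((hX.eval i).const_mul _) ((hY.eval i).const_mul _), integral_const_mul,
    integral_const_mul, hX0, hY0, mul_zero, mul_zero, add_zero]

lemma integral_trigInterp_smul_trigInterp [IsProbabilityMeasure P] (hX : MemLp X 2 P)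
    (hY : MemLp Y 2 P) (hX0 : ∀ i, ∫ ω, X ω i ∂P = 0) (hY0 : ∀ i, ∫ ω, Y ω i ∂P = 0)
    (hXY : X ⟂ᵢ[P] Y) (θ : ℝ) (i : ι) :
    ∫ ω, trigInterp X Y (θ + π / 2) ω i • trigInterp X Y θ ω ∂P =
      (sin θ * cos θ) • covarianceGap P X Y i := by
  have hrot (θ : ℝ) : MemLp (trigInterp X Y θ) 2 P :=
    (hX.const_smul (cos θ)).add (hY.const_smul (sin θ))
  have hint : Integrable (fun ω ↦ trigInterp X Y (θ + π / 2) ω i • trigInterp X Y θ ω) P :=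
    memLp_one_iff_integrable.mp ((hrot θ).smul ((hrot (θ + π / 2)).eval i))
  ext j
  have hcov := covariance_trigInterp hX hY hXY (θ + π / 2) θ i j
  rw [covariance_eq_sub ((hrot _).eval i) ((hrot _).eval j),
    integral_trigInterp_apply (hX.integrable one_le_two) (hY.integrable one_le_two) hX0 hY0,
    zero_mul, sub_zero,
    cos_add_pi_div_two, sin_add_pi_div_two] at hcov
  refine (eval_integral (fun j ↦ hint.eval j) j).trans (hcov.trans ?_)
  simp only [covarianceGap, Pi.smul_apply, smul_eq_mul]
  ring

lemma hasGaussianLaw_trigInterp_prodMk (hXY : HasGaussianLaw (fun ω ↦ (X ω, Y ω)) P) (α β : ℝ)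
    (i : ι) : HasGaussianLaw (fun ω ↦ (trigInterp X Y α ω, trigInterp X Y β ω i)) P := by
  let R (θ : ℝ) : (ι → ℝ) × (ι → ℝ) →L[ℝ] (ι → ℝ) :=
    cos θ • ContinuousLinearMap.fst ℝ _ _ + sin θ • ContinuousLinearMap.snd ℝ _ _
  have hmap := hXY.map_fun ((R α).prod ((ContinuousLinearMap.proj i).comp (R β)))
  exact hmap

lemma integral_trigInterp_mul_comp_of_hasGaussianLaw (hX : HasGaussianLaw X P)
    (hY : HasGaussianLaw Y P) (hX0 : ∀ i, ∫ ω, X ω i ∂P = 0) (hY0 : ∀ i, ∫ ω, Y ω i ∂P = 0)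
    (hXY : X ⟂ᵢ[P] Y) {F : (ι → ℝ) → ℝ} (hF : Differentiable ℝ F) {C : ℝ} (hC : ∀ z, |F z| ≤ C)
    {C' : ℝ} (hC' : ∀ z, ‖fderiv ℝ F z‖ ≤ C') (θ : ℝ) (i : ι) :
    ∫ ω, trigInterp X Y (θ + π / 2) ω i * F (trigInterp X Y θ ω) ∂P =
      sin θ * cos θ * ∫ ω, fderiv ℝ F (trigInterp X Y θ ω) (covarianceGap P X Y i) ∂P := by
  have := hX.isProbabilityMeasure
  have hlaw : HasGaussianLaw (fun ω ↦ (X ω, Y ω)) P := hXY.hasGaussianLaw hX hY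
  rw [integral_mul_comp_of_hasGaussianLaw (hasGaussianLaw_trigInterp_prodMk hlaw θ (θ + π / 2) i)
    (integral_trigInterp_apply hX.integrable hY.integrable hX0 hY0 _ i) hF hC hC',
    integral_trigInterp_smul_trigInterp hX.memLp_two hY.memLp_two hX0 hY0 hXY]
  simp only [map_smul, smul_eq_mul, integral_const_mul]

theorem hasDerivAt_integral_comp_trigInterp_of_hasGaussianLaw [DecidableEq ι]
    (hX : HasGaussianLaw X P) (hY : HasGaussianLaw Y P) (hX0 : ∀ i, ∫ ω, X ω i ∂P = 0)
    (hY0 : ∀ i, ∫ ω, Y ω i ∂P = 0) (hXY : X ⟂ᵢ[P] Y) {φ : (ι → ℝ) → ℝ} (hφ : ContDiff ℝ 2 φ)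
    {K : NNReal} (hφK : LipschitzWith K φ) {C : ℝ}
    (hC : ∀ i z, ‖fderiv ℝ (fun z ↦ fderiv ℝ φ z (Pi.single i 1)) z‖ ≤ C) (θ : ℝ) :
    HasDerivAt (fun θ ↦ ∫ ω, φ (trigInterp X Y θ ω) ∂P)
      (sin θ * cos θ * ∑ i, ∫ ω, fderiv ℝ (fun z ↦ fderiv ℝ φ z (Pi.single i 1))
        (trigInterp X Y θ ω) (covarianceGap P X Y i) ∂P) θ := by
  have := hX.isProbabilityMeasure
  have hdiff (i : ι) : Differentiable ℝ fun z ↦ fderiv ℝ φ z (Pi.single i 1) := fun z ↦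
    ((hφ.fderiv_right (m := 1) le_rfl).differentiable one_ne_zero z).clm_apply
      (differentiableAt_const _)
  have hbound (i : ι) (z : ι → ℝ) :
      |fderiv ℝ φ z (Pi.single i 1)| ≤ K * ‖(Pi.single i 1 : ι → ℝ)‖ :=
    (fderiv ℝ φ z).le_of_opNorm_le (norm_fderiv_le_of_lipschitz ℝ hφK) _
  have hint (i : ι) : Integrable (fun ω ↦ trigInterp X Y (θ + π / 2) ω i *
      fderiv ℝ φ (trigInterp X Y θ ω) (Pi.single i 1)) P :=
    ((integrable_trigInterp hX.integrable hY.integrable (θ + π / 2)).eval i).mul_bdd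
      ((hdiff i).continuous.comp_aestronglyMeasurable
        (integrable_trigInterp hX.integrable hY.integrable θ).aestronglyMeasurable)
      (ae_of_all _ fun _ ↦ hbound i _)
  have hcoord (z u : ι → ℝ) : fderiv ℝ φ z u = ∑ i, u i * fderiv ℝ φ z (Pi.single i 1) := by
    conv_lhs => rw [← Finset.univ_sum_single u, map_sum]
    refine Finset.sum_congr rfl fun i _ ↦ ?_
    rw [← smul_eq_mul, ← map_smul, ← Pi.single_smul', smul_eq_mul, mul_one]
  refine (hasDerivAt_integral_comp_trigInterp hX.integrable hY.integrable
    (hφ.of_le one_le_two) hφK θ).congr_deriv ?_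
  rw [integral_congr_ae (ae_of_all _ fun ω ↦ hcoord _ _), integral_finsetSum _ fun i _ ↦ hint i,
    Finset.mul_sum]
  exact Finset.sum_congr rfl fun i _ ↦ integral_trigInterp_mul_comp_of_hasGaussianLaw hX hY hX0
    hY0 hXY (hdiff i) (hbound i) (hC i) θ i

theorem integral_comp_le_integral_comp_of_covarianceGap [DecidableEq ι]
    (hX : HasGaussianLaw X P) (hY : HasGaussianLaw Y P) (hX0 : ∀ i, ∫ ω, X ω i ∂P = 0)
    (hY0 : ∀ i, ∫ ω, Y ω i ∂P = 0) (hXY : X ⟂ᵢ[P] Y) {φ : (ι → ℝ) → ℝ} (hφ : ContDiff ℝ 2 φ)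
    {K : NNReal} (hφK : LipschitzWith K φ) {C : ℝ}
    (hC : ∀ i z, ‖fderiv ℝ (fun z ↦ fderiv ℝ φ z (Pi.single i 1)) z‖ ≤ C)
    (hgap : ∀ z, 0 ≤ ∑ i, fderiv ℝ (fun z ↦ fderiv ℝ φ z (Pi.single i 1)) z
      (covarianceGap P X Y i)) :
    ∫ ω, φ (X ω) ∂P ≤ ∫ ω, φ (Y ω) ∂P := by
  have := hX.isProbabilityMeasure
  have hderiv := hasDerivAt_integral_comp_trigInterp_of_hasGaussianLaw hX hY hX0 hY0 hXY hφ hφK hC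
  have hmono : MonotoneOn (fun θ ↦ ∫ ω, φ (trigInterp X Y θ ω) ∂P) (Icc 0 (π / 2)) := by
    refine monotoneOn_of_deriv_nonneg (convex_Icc _ _)
      (fun θ _ ↦ (hderiv θ).continuousAt.continuousWithinAt)
      (fun θ _ ↦ (hderiv θ).differentiableAt.differentiableWithinAt) fun θ hθ ↦ ?_
    rw [interior_Icc] at hθ
    rw [(hderiv θ).deriv]
    refine mul_nonneg (mul_nonneg
      (sin_nonneg_of_nonneg_of_le_pi hθ.1.le (by linarith [hθ.2, pi_pos]))
      (cos_nonneg_of_neg_pi_div_two_le_of_le (by linarith [hθ.1, pi_pos]) hθ.2.le)) ?_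
    rw [← integral_finsetSum]
    · exact integral_nonneg fun ω ↦ hgap _
    · exact fun i _ ↦ .of_bound
        ((measurable_fderiv_apply_const ℝ _ _).comp_aemeasurable
          (integrable_trigInterp hX.integrable hY.integrable θ).aemeasurable).aestronglyMeasurable _
        (ae_of_all _ fun ω ↦ ContinuousLinearMap.le_of_opNorm_le _ (hC i _) _)
  simpa [trigInterp] using hmono (left_mem_Icc.mpr pi_div_two_pos.le)
    (right_mem_Icc.mpr pi_div_two_pos.le) pi_div_two_pos.le

end GaussianInterpolation

section LogSumExp

variable {ι : Type*} [Fintype ι]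

/-- The log-sum-exp function, a smooth convex approximation of the maximum of the coordinates. -/
noncomputable def logSumExp (z : ι → ℝ) : ℝ := Real.log (∑ i, exp (z i))

/-- The softmax (Gibbs) weights, which form the gradient of `logSumExp`. -/
noncomputable def softmax (z : ι → ℝ) (i : ι) : ℝ := exp (z i) / ∑ j, exp (z j)

lemma softmax_nonneg (z : ι → ℝ) (i : ι) : 0 ≤ softmax z i := by
  unfold softmax
  positivity

lemma sum_mul_sub_sum_nonneg {p : ι → ℝ} (hp : ∀ i, 0 ≤ p i) (hp1 : ∑ i, p i = 1)
    {D : ι → ι → ℝ} (hD : ∀ i j, 0 ≤ D i i + D j j - D i j - D j i) :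
    0 ≤ ∑ i, p i * (D i i - ∑ j, p j * D i j) := by
  have hfst : ∑ i, ∑ j, p i * p j * D i i = ∑ i, p i * D i i :=
    Finset.sum_congr rfl fun i _ ↦ by
      rw [← Finset.sum_mul, ← Finset.mul_sum, hp1, mul_one]
  have hsnd : ∑ i, ∑ j, p i * p j * D j j = ∑ i, p i * D i i := by
    rw [Finset.sum_comm, ← hfst]
    exact Finset.sum_congr rfl fun i _ ↦ Finset.sum_congr rfl fun j _ ↦ by ring
  have hswap : ∑ i, ∑ j, p i * p j * D j i = ∑ i, ∑ j, p i * p j * D i j := by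
    rw [Finset.sum_comm]
    exact Finset.sum_congr rfl fun i _ ↦ Finset.sum_congr rfl fun j _ ↦ by ring
  have hsymm : 0 ≤ ∑ i, ∑ j, p i * p j * (D i i + D j j - D i j - D j i) :=
    Finset.sum_nonneg fun i _ ↦ Finset.sum_nonneg fun j _ ↦
      mul_nonneg (mul_nonneg (hp i) (hp j)) (hD i j)
  simp only [mul_add, mul_sub, Finset.sum_add_distrib, Finset.sum_sub_distrib, hfst, hsnd, hswap]
    at hsymm
  simp only [mul_sub, Finset.sum_sub_distrib, Finset.mul_sum, ← mul_assoc]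
  linarith

variable [Nonempty ι]

lemma sum_exp_pos (z : ι → ℝ) : 0 < ∑ i, exp (z i) :=
  Finset.sum_pos (fun i _ ↦ exp_pos (z i)) Finset.univ_nonempty

lemma sum_softmax (z : ι → ℝ) : ∑ i, softmax z i = 1 := by
  unfold softmax
  rw [← Finset.sum_div, div_self (sum_exp_pos z).ne']

lemma softmax_le_one (z : ι → ℝ) (i : ι) : softmax z i ≤ 1 :=
  sum_softmax z ▸ Finset.single_le_sum (fun j _ ↦ softmax_nonneg z j) (Finset.mem_univ i)

lemma le_logSumExp (z : ι → ℝ) (i : ι) : z i ≤ logSumExp z :=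
  (Real.le_log_iff_exp_le (sum_exp_pos z)).mpr
    (Finset.single_le_sum (f := fun i ↦ exp (z i)) (fun j _ ↦ (exp_pos (z j)).le)
      (Finset.mem_univ i))

lemma logSumExp_le {z : ι → ℝ} {m : ℝ} (hm : ∀ i, z i ≤ m) :
    logSumExp z ≤ m + Real.log (Fintype.card ι) := by
  rw [logSumExp, Real.log_le_iff_le_exp (sum_exp_pos z), Real.exp_add,
    Real.exp_log (Nat.cast_pos.mpr Fintype.card_pos)]
  calc ∑ i, exp (z i) ≤ ∑ _i : ι, exp m := Finset.sum_le_sum fun i _ ↦ exp_le_exp.mpr (hm i)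
    _ = exp m * Fintype.card ι := by simp [mul_comm]

lemma contDiff_logSumExp : ContDiff ℝ 2 (logSumExp (ι := ι)) :=
  ContDiff.log (ContDiff.sum fun i _ ↦ (contDiff_apply ℝ ℝ i).exp) fun z ↦ (sum_exp_pos z).ne'

lemma hasFDerivAt_sum_exp (z : ι → ℝ) :
    HasFDerivAt (fun z : ι → ℝ ↦ ∑ i, exp (z i))
      ((∑ i, exp (z i)) • ∑ i, softmax z i • (.proj i : (ι → ℝ) →L[ℝ] ℝ)) z := by
  refine (HasFDerivAt.fun_sum fun i _ ↦ (hasFDerivAt_apply i z).exp).congr_fderiv ?_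
  simp only [Finset.smul_sum, smul_smul, softmax, mul_div_cancel₀ _ (sum_exp_pos z).ne']

lemma hasFDerivAt_logSumExp (z : ι → ℝ) :
    HasFDerivAt logSumExp (∑ i, softmax z i • (.proj i : (ι → ℝ) →L[ℝ] ℝ)) z := by
  refine ((hasFDerivAt_sum_exp z).log (sum_exp_pos z).ne').congr_fderiv ?_
  rw [smul_smul, inv_mul_cancel₀ (sum_exp_pos z).ne', one_smul]

lemma fderiv_logSumExp_single [DecidableEq ι] (z : ι → ℝ) (i : ι) :
    fderiv ℝ logSumExp z (Pi.single i 1) = softmax z i := by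
  simp [(hasFDerivAt_logSumExp z).fderiv, Pi.single_apply]

lemma hasFDerivAt_softmax (z : ι → ℝ) (i : ι) :
    HasFDerivAt (softmax · i) (softmax z i • ((.proj i : (ι → ℝ) →L[ℝ] ℝ) -
      ∑ j, softmax z j • (.proj j : (ι → ℝ) →L[ℝ] ℝ))) z := by
  have hlog (z : ι → ℝ) : softmax z i = exp (z i - logSumExp z) := by
    rw [Real.exp_sub, logSumExp, Real.exp_log (sum_exp_pos z), softmax]
  simp only [hlog z, funext hlog]
  exact ((hasFDerivAt_apply i z).fun_sub (hasFDerivAt_logSumExp z)).exp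

lemma norm_sum_softmax_smul_proj_le (z : ι → ℝ) :
    ‖∑ i, softmax z i • (.proj i : (ι → ℝ) →L[ℝ] ℝ)‖ ≤ 1 := by
  refine ContinuousLinearMap.opNorm_le_bound _ zero_le_one fun u ↦ ?_
  simp only [sum_apply, smul_apply, ContinuousLinearMap.proj_apply, smul_eq_mul]
  calc ‖∑ i, softmax z i * u i‖ ≤ ∑ i, softmax z i * ‖u‖ :=
        norm_sum_le_of_le _ fun i _ ↦ by
          rw [norm_mul, Real.norm_of_nonneg (softmax_nonneg z i)]
          exact mul_le_mul_of_nonneg_left (norm_le_pi_norm u i) (softmax_nonneg z i)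
    _ = 1 * ‖u‖ := by rw [← Finset.sum_mul, sum_softmax]

lemma lipschitzWith_logSumExp : LipschitzWith 1 (logSumExp (ι := ι)) :=
  lipschitzWith_of_nnnorm_fderiv_le (contDiff_logSumExp.differentiable two_ne_zero) fun z ↦ by
    rw [(hasFDerivAt_logSumExp z).fderiv]
    exact norm_sum_softmax_smul_proj_le z

lemma norm_fderiv_softmax_le (z : ι → ℝ) (i : ι) : ‖fderiv ℝ (softmax · i) z‖ ≤ 2 := by
  have hproj : ‖(.proj i : (ι → ℝ) →L[ℝ] ℝ)‖ ≤ 1 :=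
    ContinuousLinearMap.opNorm_le_bound _ zero_le_one fun u ↦ by
      simpa using norm_le_pi_norm u i
  rw [(hasFDerivAt_softmax z i).fderiv, norm_smul, Real.norm_of_nonneg (softmax_nonneg z i)]
  refine (mul_le_of_le_one_left (norm_nonneg _) (softmax_le_one z i)).trans ?_
  exact (norm_sub_le_of_le hproj (norm_sum_softmax_smul_proj_le z)).trans_eq one_add_one_eq_two

lemma sum_fderiv_softmax_nonneg (z : ι → ℝ) {D : ι → ι → ℝ}
    (hD : ∀ i j, 0 ≤ D i i + D j j - D i j - D j i) :
    0 ≤ ∑ i, fderiv ℝ (softmax · i) z (D i) := by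
  simpa [(hasFDerivAt_softmax z _).fderiv] using
    sum_mul_sub_sum_nonneg (softmax_nonneg z) (sum_softmax z) hD

end LogSumExp

section SudakovFernique

variable {ι : Type*}

section Fintype

variable [Fintype ι]

lemma covarianceGap_add_sub_sub {Ω : Type*} [MeasurableSpace Ω] {P : Measure Ω}
    [IsFiniteMeasure P] {X Y : Ω → ι → ℝ} (hX : MemLp X 2 P) (hY : MemLp Y 2 P) (i j : ι) :
    covarianceGap P X Y i i + covarianceGap P X Y j j - covarianceGap P X Y i j -
        covarianceGap P X Y j i =
      Var[fun ω ↦ Y ω i - Y ω j; P] - Var[fun ω ↦ X ω i - X ω j; P] := by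
  rw [variance_fun_sub (hX.eval i) (hX.eval j), variance_fun_sub (hY.eval i) (hY.eval j)]
  simp only [covarianceGap, covariance_self (hX.eval _).aemeasurable,
    covariance_self (hY.eval _).aemeasurable, covariance_comm (X · j), covariance_comm (Y · j)]
  ring

variable [Nonempty ι]

lemma integral_logSumExp_le_of_indepFun {Ω : Type*} [MeasurableSpace Ω] {P : Measure Ω}
    {X Y : Ω → ι → ℝ} (hX : HasGaussianLaw X P) (hY : HasGaussianLaw Y P)
    (hX0 : ∀ i, ∫ ω, X ω i ∂P = 0) (hY0 : ∀ i, ∫ ω, Y ω i ∂P = 0) (hXY : X ⟂ᵢ[P] Y)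
    (hvar : ∀ i j, Var[fun ω ↦ X ω i - X ω j; P] ≤ Var[fun ω ↦ Y ω i - Y ω j; P]) :
    ∫ ω, logSumExp (X ω) ∂P ≤ ∫ ω, logSumExp (Y ω) ∂P := by
  classical
  have := hX.isProbabilityMeasure
  refine integral_comp_le_integral_comp_of_covarianceGap hX hY hX0 hY0 hXY contDiff_logSumExp
    lipschitzWith_logSumExp (C := 2) (fun i z ↦ ?_) fun z ↦ ?_ <;>
    simp only [fderiv_logSumExp_single]
  · exact norm_fderiv_softmax_le z i
  · refine sum_fderiv_softmax_nonneg z fun i j ↦ ?_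
    rw [covarianceGap_add_sub_sub hX.memLp_two hY.memLp_two]
    exact sub_nonneg.mpr (hvar i j)

variable {Ω Ω' : Type*} [MeasurableSpace Ω] [MeasurableSpace Ω'] {P : Measure Ω} {Q : Measure Ω'}

lemma identDistrib_comp_of_measurePreserving {α : Type*} [MeasurableSpace α] {f : Ω → Ω'}
    (hf : MeasurePreserving f P Q) {X : Ω' → α} (hX : AEMeasurable X Q) :
    IdentDistrib (fun ω ↦ X (f ω)) X P Q where
  aemeasurable_fst := hX.comp_quasiMeasurePreserving hf.quasiMeasurePreserving
  aemeasurable_snd := hX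
  map_eq := by
    rw [← Function.comp_def, ← AEMeasurable.map_map_of_aemeasurable _ hf.aemeasurable, hf.map_eq]
    rwa [hf.map_eq]

variable {X : Ω → ι → ℝ} {Y : Ω' → ι → ℝ}

lemma integral_logSumExp_le_of_variance_sub_le (hX : HasGaussianLaw X P) (hY : HasGaussianLaw Y Q)
    (hX0 : ∀ i, ∫ ω, X ω i ∂P = 0) (hY0 : ∀ i, ∫ ω, Y ω i ∂Q = 0)
    (hvar : ∀ i j, Var[fun ω ↦ X ω i - X ω j; P] ≤ Var[fun ω ↦ Y ω i - Y ω j; Q]) :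
    ∫ ω, logSumExp (X ω) ∂P ≤ ∫ ω, logSumExp (Y ω) ∂Q := by
  have := hX.isProbabilityMeasure
  have := hY.isProbabilityMeasure
  have hXfst : IdentDistrib (fun p : Ω × Ω' ↦ X p.1) X (P.prod Q) P :=
    identDistrib_comp_of_measurePreserving measurePreserving_fst hX.aemeasurable
  have hYsnd : IdentDistrib (fun p : Ω × Ω' ↦ Y p.2) Y (P.prod Q) Q :=
    identDistrib_comp_of_measurePreserving measurePreserving_snd hY.aemeasurable
  have hcoord (i : ι) := measurable_pi_apply (X := fun _ : ι ↦ ℝ) i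
  have hsub (i j : ι) := (hcoord i).sub (hcoord j)
  have hmeas := (contDiff_logSumExp (ι := ι)).continuous.measurable
  have hle := integral_logSumExp_le_of_indepFun ⟨hXfst.map_eq ▸ hX.isGaussian_map⟩
    ⟨hYsnd.map_eq ▸ hY.isGaussian_map⟩
    (fun i ↦ (hXfst.comp (hcoord i)).integral_eq.trans (hX0 i))
    (fun i ↦ (hYsnd.comp (hcoord i)).integral_eq.trans (hY0 i))
    (indepFun_prod₀ hX.aemeasurable hY.aemeasurable) fun i j ↦
      (hXfst.comp (hsub i j)).variance_eq.trans_le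
        ((hvar i j).trans_eq (hYsnd.comp (hsub i j)).variance_eq.symm)
  exact (hXfst.comp hmeas).integral_eq.symm.trans_le (hle.trans_eq (hYsnd.comp hmeas).integral_eq)

lemma integrable_iSup_apply (hX : Integrable X P) : Integrable (fun ω ↦ ⨆ i, X ω i) P := by
  refine hX.norm.mono' (AEMeasurable.iSup fun i ↦ (hX.eval i).aemeasurable).aestronglyMeasurable
    (ae_of_all _ fun ω ↦ abs_le.mpr ⟨?_, ?_⟩)
  · obtain ⟨i⟩ := ‹Nonempty ι›
    exact (abs_le.mp (norm_le_pi_norm (X ω) i)).1.trans (le_ciSup (finite_range (X ω)).bddAbove i)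
  · exact ciSup_le fun i ↦ (abs_le.mp (norm_le_pi_norm (X ω) i)).2

lemma mul_integral_iSup_le_integral_logSumExp [IsFiniteMeasure P] (hX : Integrable X P) {β : ℝ}
    (hβ : 0 ≤ β) : β * ∫ ω, ⨆ i, X ω i ∂P ≤ ∫ ω, logSumExp (β • X ω) ∂P := by
  rw [← integral_const_mul]
  refine integral_mono ((integrable_iSup_apply hX).const_mul β)
    (integrable_comp_of_lipschitzWith lipschitzWith_logSumExp (hX.smul β)) fun ω ↦ ?_
  simp only [Real.mul_iSup_of_nonneg hβ]
  exact ciSup_le (le_logSumExp (β • X ω))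

lemma integral_logSumExp_smul_le [IsProbabilityMeasure P] (hX : Integrable X P) {β : ℝ}
    (hβ : 0 ≤ β) :
    ∫ ω, logSumExp (β • X ω) ∂P ≤ β * ∫ ω, ⨆ i, X ω i ∂P + Real.log (Fintype.card ι) := by
  have hint := (integrable_iSup_apply hX).const_mul β
  calc ∫ ω, logSumExp (β • X ω) ∂P
      ≤ ∫ ω, (β * ⨆ i, X ω i) + Real.log (Fintype.card ι) ∂P := by
        refine integral_mono (integrable_comp_of_lipschitzWith lipschitzWith_logSumExp
          (hX.smul β)) (hint.add (integrable_const _)) fun ω ↦ ?_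
        exact logSumExp_le fun i ↦
          mul_le_mul_of_nonneg_left (le_ciSup (finite_range (X ω)).bddAbove i) hβ
    _ = β * ∫ ω, ⨆ i, X ω i ∂P + Real.log (Fintype.card ι) := by
        rw [integral_add hint (integrable_const _), integral_const_mul, integral_const]
        simp

end Fintype

/-- The Sudakov–Fernique inequality. -/
theorem integral_iSup_le_integral_iSup_of_variance_sub_le [Finite ι] [Nonempty ι]
    {Ω Ω' : Type*} [MeasurableSpace Ω] [MeasurableSpace Ω'] {P : Measure Ω} {Q : Measure Ω'}
    {X : Ω → ι → ℝ} {Y : Ω' → ι → ℝ} (hX : HasGaussianLaw X P) (hY : HasGaussianLaw Y Q)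
    (hX0 : ∀ i, ∫ ω, X ω i ∂P = 0) (hY0 : ∀ i, ∫ ω, Y ω i ∂Q = 0)
    (hvar : ∀ i j, Var[fun ω ↦ X ω i - X ω j; P] ≤ Var[fun ω ↦ Y ω i - Y ω j; Q]) :
    ∫ ω, ⨆ i, X ω i ∂P ≤ ∫ ω, ⨆ i, Y ω i ∂Q := by
  cases nonempty_fintype ι
  have := hX.isProbabilityMeasure
  have := hY.isProbabilityMeasure
  have hscaled (β : ℝ) (hβ : 0 ≤ β) :
      β * ∫ ω, ⨆ i, X ω i ∂P ≤ β * ∫ ω, ⨆ i, Y ω i ∂Q + Real.log (Fintype.card ι) := by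
    refine (mul_integral_iSup_le_integral_logSumExp hX.integrable hβ).trans
      (le_trans ?_ (integral_logSumExp_smul_le hY.integrable hβ))
    refine integral_logSumExp_le_of_variance_sub_le (hX.fun_smul β) (hY.fun_smul β)
      (fun i ↦ ?_) (fun i ↦ ?_) fun i j ↦ ?_ <;> simp only [Pi.smul_apply, smul_eq_mul]
    · rw [integral_const_mul, hX0, mul_zero]
    · rw [integral_const_mul, hY0, mul_zero]
    · simp only [← mul_sub, variance_const_mul]
      exact mul_le_mul_of_nonneg_left (hvar i j) (sq_nonneg β)
  have hlim : Tendsto (fun β : ℝ ↦ ∫ ω, ⨆ i, Y ω i ∂Q + Real.log (Fintype.card ι) / β) atTop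
      (nhds (∫ ω, ⨆ i, Y ω i ∂Q)) := by
    simpa only [id, add_zero] using
      (tendsto_id.const_div_atTop (Real.log (Fintype.card ι))).const_add (∫ ω, ⨆ i, Y ω i ∂Q)
  refine ge_of_tendsto hlim ((eventually_gt_atTop 0).mono fun β hβ ↦ ?_)
  rw [← sub_le_iff_le_add', le_div_iff₀' hβ, mul_sub]
  exact sub_le_iff_le_add'.mpr (hscaled β hβ.le)

end SudakovFernique

section RandomWalk

variable {Ω : Type*} [MeasurableSpace Ω] {P : Measure Ω}

lemma integral_eq_zero_of_identDistrib_neg {S : Ω → ℝ} (hsymm : IdentDistrib S (-S) P P) :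
    ∫ ω, S ω ∂P = 0 := by
  have h := hsymm.integral_eq
  simp only [Pi.neg_apply, integral_neg] at h
  linarith

lemma identDistrib_neg_sum_range {X : ℕ → Ω → ℝ} (hX : iIndepFun X P)
    (hsymm : ∀ i, IdentDistrib (X i) (-X i) P P) (n : ℕ) :
    IdentDistrib (fun ω ↦ ∑ i ∈ Finset.range n, X i ω) (-fun ω ↦ ∑ i ∈ Finset.range n, X i ω)
      P P := by
  have hpi := IdentDistrib.pi hsymm hX (hX.comp _ fun _ ↦ measurable_neg)
  have hsum := hpi.comp (u := fun x : ℕ → ℝ ↦ ∑ i ∈ Finset.range n, x i) (by fun_prop)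
  convert! hsum using 1
  ext ω
  simp

lemma indepFun_zero_succ {α : Type*} [MeasurableSpace α] {X : ℕ → Ω → α}
    (hX : iIndepFun X P) (hXm : ∀ i, Measurable (X i)) :
    X 0 ⟂ᵢ[P] fun ω i ↦ X (i + 1) ω := by
  have h := indep_iSup_of_disjoint (fun i ↦ (hXm i).comap_le) hX
    (disjoint_singleton_left.mpr (self_notMem_Ioi (a := 0)))
  refine indep_of_indep_of_le_left (indep_of_indep_of_le_right h ?_) ?_
  · simp only [MeasurableSpace.pi, MeasurableSpace.comap_iSup, MeasurableSpace.comap_comp]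
    exact iSup_le fun i ↦ le_iSup₂_of_le (i + 1) i.succ_pos le_rfl
  · exact le_iSup₂_of_le 0 rfl le_rfl

lemma partialSups_sum_range_succ (x : ℕ → ℝ) (n : ℕ) :
    partialSups (fun k ↦ ∑ i ∈ Finset.range k, x i) (n + 1) =
      max 0 (x 0 + partialSups (fun k ↦ ∑ i ∈ Finset.range k, x (i + 1)) n) := by
  rw [partialSups_add_one', ← partialSups_const_add]
  simp [Function.comp_def, Finset.sum_range_succ', add_comm]

lemma measurable_partialSups_sum_range (n : ℕ) :
    Measurable fun x : ℕ → ℝ ↦ partialSups (fun k ↦ ∑ i ∈ Finset.range k, x i) n := by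
  simp only [partialSups_eq_sup'_range]
  exact Finset.measurable_range_sup'' fun k _ ↦ by fun_prop

lemma integrable_partialSups {Z : ℕ → Ω → ℝ} (hZ : ∀ k, Integrable (Z k) P) (n : ℕ) :
    Integrable (fun ω ↦ partialSups (Z · ω) n) P := by
  induction n with
  | zero => simpa using hZ 0
  | succ n ih =>
    simp only [partialSups_add_one]
    exact ih.sup (hZ (n + 1))

variable [IsProbabilityMeasure P]

lemma integral_abs_le_integral_abs_sub {S : Ω → ℝ} (hS : Integrable S P)
    (hsymm : IdentDistrib S (-S) P P) (r : ℝ) : ∫ ω, |S ω| ∂P ≤ ∫ ω, |S ω - r| ∂P := by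
  have hreflect : ∫ ω, |S ω + r| ∂P = ∫ ω, |S ω - r| ∂P := by
    refine (hsymm.comp (u := fun s ↦ |s + r|) (by fun_prop)).integral_eq.trans ?_
    exact integral_congr_ae (ae_of_all _ fun ω ↦ by simp [abs_sub_comm, neg_add_eq_sub])
  have htriangle (ω : Ω) : 2 * |S ω| ≤ |S ω - r| + |S ω + r| := by
    rw [← abs_two, ← abs_mul]
    exact (congrArg abs (by ring)).trans_le (abs_add_le (S ω - r) (S ω + r))
  have hsub : Integrable (fun ω ↦ |S ω - r|) P := (hS.sub (integrable_const r)).abs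
  have hadd : Integrable (fun ω ↦ |S ω + r|) P := (hS.add (integrable_const r)).abs
  have hmono := integral_mono (hS.abs.const_mul 2) (hsub.add hadd) htriangle
  rw [integral_const_mul, integral_add' hsub hadd, hreflect] at hmono
  linarith

lemma two_mul_integral_max_sub {S : Ω → ℝ} (hS : Integrable S P) (hS0 : ∫ ω, S ω ∂P = 0) (r : ℝ) :
    2 * ∫ ω, max (S ω - r) 0 ∂P = ∫ ω, |S ω - r| ∂P - r := by
  have hsub : Integrable (fun ω ↦ S ω - r) P := hS.sub (integrable_const r)
  have hmax (x : ℝ) : 2 * max x 0 = x + |x| := by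
    rcases le_total 0 x with hx | hx
    · rw [max_eq_left hx, abs_of_nonneg hx, two_mul]
    · rw [max_eq_right hx, abs_of_nonpos hx, mul_zero, add_neg_cancel]
  simp only [← integral_const_mul, hmax]
  rw [integral_add hsub hsub.abs, integral_sub hS (integrable_const r), hS0, integral_const]
  simp [neg_add_eq_sub]

lemma integral_max_sub_le_of_nonneg {R S : Ω → ℝ} (hR : Integrable R P) (hS : Integrable S P)
    (hsymm : IdentDistrib S (-S) P P) (hR0 : ∀ ω, 0 ≤ R ω)
    (hle : ∀ r, 0 ≤ r → ∫ ω, max (R ω - r) 0 ∂P ≤ 2 * ∫ ω, max (S ω - r) 0 ∂P) (r : ℝ) :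
    ∫ ω, max (R ω - r) 0 ∂P ≤ 2 * ∫ ω, max (S ω - r) 0 ∂P := by
  rcases le_total 0 r with hr | hr
  · exact hle r hr
  have hS0 := integral_eq_zero_of_identDistrib_neg hsymm
  calc ∫ ω, max (R ω - r) 0 ∂P = ∫ ω, max (R ω - 0) 0 ∂P - r := by
        simp only [sub_zero, max_eq_left (hR0 _), max_eq_left (sub_nonneg.mpr (hr.trans (hR0 _)))]
        simp [integral_sub hR (integrable_const r)]
    _ ≤ 2 * ∫ ω, max (S ω - 0) 0 ∂P - r := sub_le_sub_right (hle 0 le_rfl) r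
    _ = ∫ ω, |S ω| ∂P - r := by
        rw [two_mul_integral_max_sub hS hS0]
        simp only [sub_zero]
    _ ≤ ∫ ω, |S ω - r| ∂P - r :=
        sub_le_sub_right (integral_abs_le_integral_abs_sub hS hsymm r) r
    _ = 2 * ∫ ω, max (S ω - r) 0 ∂P := (two_mul_integral_max_sub hS hS0 r).symm

lemma integral_max_add_sub_le_of_indepFun {ξ R S : Ω → ℝ} (hξ : Integrable ξ P)
    (hR : Integrable R P) (hS : Integrable S P) (hξR : ξ ⟂ᵢ[P] R) (hξS : ξ ⟂ᵢ[P] S) {c : ℝ}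
    (hle : ∀ r, ∫ ω, max (R ω - r) 0 ∂P ≤ c * ∫ ω, max (S ω - r) 0 ∂P) (r : ℝ) :
    ∫ ω, max (ξ ω + R ω - r) 0 ∂P ≤ c * ∫ ω, max (ξ ω + S ω - r) 0 ∂P := by
  have hmeas : Measurable fun p : ℝ × ℝ ↦ max (p.1 + p.2 - r) 0 := by fun_prop
  have hint {T : Ω → ℝ} (hT : Integrable T P) :
      Integrable (fun ω ↦ max (ξ ω + T ω - r) 0) P :=
    ((hξ.add hT).sub (integrable_const r)).pos_part
  have hinner {T : Ω → ℝ} (hT : Integrable T P) (x : ℝ) :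
      ∫ y, max (x + y - r) 0 ∂P.map T = ∫ ω, max (T ω - (r - x)) 0 ∂P := by
    rw [integral_map hT.aemeasurable (by fun_prop)]
    simp only [← sub_add, add_comm x, add_sub_right_comm]
  rw [integral_comp_prodMk_of_indepFun hξ.aemeasurable hR.aemeasurable hξR hmeas (hint hR),
    integral_comp_prodMk_of_indepFun hξ.aemeasurable hS.aemeasurable hξS hmeas (hint hS),
    ← integral_const_mul]
  refine integral_mono
    (integrable_prod_map_of_indepFun hξ.aemeasurable hR.aemeasurable hξR hmeas
      (hint hR)).integral_prod_left
    ((integrable_prod_map_of_indepFun hξ.aemeasurable hS.aemeasurable hξS hmeas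
      (hint hS)).integral_prod_left.const_mul c) fun x ↦ ?_
  simpa only [hinner hR, hinner hS] using hle (r - x)

/-- A stop-loss form of Lévy's maximal inequality. Letting `r` range over all reals is what makes
the induction on the number of steps work: conditioning on the first step shifts `r`. -/
theorem integral_max_partialSups_sub_le {X : ℕ → Ω → ℝ} (hX : iIndepFun X P)
    (hXm : ∀ i, Measurable (X i)) (hint : ∀ i, Integrable (X i) P)
    (hsymm : ∀ i, IdentDistrib (X i) (-X i) P P) (n : ℕ) (r : ℝ) :
    ∫ ω, max (partialSups (fun k ↦ ∑ i ∈ Finset.range k, X i ω) n - r) 0 ∂P ≤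
      2 * ∫ ω, max ((∑ i ∈ Finset.range n, X i ω) - r) 0 ∂P := by
  have hsum (m k : ℕ) : Integrable (fun ω ↦ ∑ i ∈ Finset.range k, X (i + m) ω) P :=
    integrable_finsetSum _ fun i _ ↦ hint (i + m)
  induction n generalizing X r with
  | zero =>
    simpa using le_mul_of_one_le_left (le_max_right (-r) 0) one_le_two
  | succ n ih =>
    have hindep := indepFun_zero_succ hX hXm
    have hstep := integral_max_add_sub_le_of_indepFun (hint 0)
      (integrable_partialSups (hsum 1) n) (hsum 1 n)
      (hindep.comp measurable_id (measurable_partialSups_sum_range n))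
      (hindep.comp measurable_id
        (show Measurable fun x : ℕ → ℝ ↦ ∑ i ∈ Finset.range n, x i by fun_prop))
      fun r ↦ ih (hX.precomp (add_left_injective 1)) (fun i ↦ hXm _) (fun i ↦ hint _)
        (fun i ↦ hsymm _) r fun m k ↦ hsum (m + 1) k
    refine integral_max_sub_le_of_nonneg (integrable_partialSups (hsum 0) _) (hsum 0 _)
      (identDistrib_neg_sum_range hX hsymm _) (fun ω ↦ ?_) (fun r hr ↦ ?_) r
    · exact (partialSups_sum_range_succ (X · ω) n).symm ▸ le_max_left _ _
    · have hmax (y : ℝ) : max (max 0 y - r) 0 = max (y - r) 0 := by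
        rw [← max_sub_sub_right, zero_sub, max_right_comm, max_eq_right (neg_nonpos.mpr hr),
          max_comm]
      simpa only [partialSups_sum_range_succ, hmax, Finset.sum_range_succ', add_comm _ (X 0 _)]
        using hstep r

theorem integral_partialSups_le_integral_abs {X : ℕ → Ω → ℝ} (hX : iIndepFun X P)
    (hXm : ∀ i, Measurable (X i)) (hint : ∀ i, Integrable (X i) P)
    (hsymm : ∀ i, IdentDistrib (X i) (-X i) P P) (n : ℕ) :
    ∫ ω, partialSups (fun k ↦ ∑ i ∈ Finset.range k, X i ω) n ∂P ≤
      ∫ ω, |∑ i ∈ Finset.range n, X i ω| ∂P := by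
  have hmax := integral_max_partialSups_sub_le hX hXm hint hsymm n 0
  rw [two_mul_integral_max_sub (integrable_finsetSum _ fun i _ ↦ hint i)
    (integral_eq_zero_of_identDistrib_neg (identDistrib_neg_sum_range hX hsymm n))] at hmax
  have hnonneg (ω : Ω) : 0 ≤ partialSups (fun k ↦ ∑ i ∈ Finset.range k, X i ω) n :=
    le_partialSups_of_le (fun k ↦ ∑ i ∈ Finset.range k, X i ω) n.zero_le
  simpa only [sub_zero, max_eq_left (hnonneg _)] using hmax

end RandomWalk

section GaussianWalk

variable {Ω : Type*} [MeasurableSpace Ω] {P : Measure Ω}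

lemma integral_abs_of_hasGaussianLaw {X : Ω → ℝ} (hX : HasGaussianLaw X P)
    (hX0 : ∫ ω, X ω ∂P = 0) : ∫ ω, |X ω| ∂P = √(2 * Var[X; P] / π) := by
  rw [← integral_map (f := fun x ↦ |x|) hX.aemeasurable (by fun_prop), hX.map_eq_gaussianReal, hX0,
    integral_abs_gaussianReal, Real.coe_toNNReal _ (variance_nonneg X P)]

lemma hasGaussianLaw_of_isGaussianProcess {T : Type*} [Finite T] {X : T → Ω → ℝ}
    (hX : IsGaussianProcess X P) : HasGaussianLaw (fun ω t ↦ X t ω) P := by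
  cases nonempty_fintype T
  let reindex : (↥(Finset.univ : Finset T) → ℝ) →L[ℝ] T → ℝ :=
    .pi fun t ↦ .proj ⟨t, Finset.mem_univ t⟩
  exact (hX.hasGaussianLaw Finset.univ).map reindex

lemma isGaussianProcess_sum_range {X : ℕ → Ω → ℝ} (hX : iIndepFun X P)
    (hG : ∀ i, HasGaussianLaw (X i) P) :
    IsGaussianProcess (fun n ω ↦ ∑ i ∈ Finset.range n, X i ω) P := by
  have hX' : IsGaussianProcess X P :=
    ⟨fun I ↦ iIndepFun.hasGaussianLaw (fun i ↦ hG i) (hX.precomp Subtype.val_injective)⟩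
  refine hX'.of_isGaussianProcess fun n ↦
    ⟨Finset.range n, ∑ i : Finset.range n, ContinuousLinearMap.proj i, fun ω ↦ ?_⟩
  simp [Finset.sum_attach (Finset.range n) fun i ↦ X i ω]

lemma variance_sum_range_sub_sum_range {X : ℕ → Ω → ℝ} (hX : iIndepFun X P)
    (hX2 : ∀ i, MemLp (X i) 2 P) {v : ℝ} (hv : ∀ i, Var[X i; P] = v) (j k : ℕ) :
    Var[fun ω ↦ (∑ i ∈ Finset.range j, X i ω) - ∑ i ∈ Finset.range k, X i ω; P] =
      |(j : ℝ) - k| * v := by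
  wlog hkj : k ≤ j generalizing j k
  · rw [abs_sub_comm, ← this k j (le_of_not_ge hkj), ← variance_fun_neg]
    simp only [neg_sub]
  have hsum : (fun ω ↦ (∑ i ∈ Finset.range j, X i ω) - ∑ i ∈ Finset.range k, X i ω) =
      ∑ i ∈ Finset.Ico k j, X i := by
    ext ω
    rw [Finset.sum_apply, Finset.sum_Ico_eq_sub _ hkj]
  rw [hsum, IndepFun.variance_sum (fun i _ ↦ hX2 i) fun i _ l _ hil ↦ hX.indepFun hil]
  simp [hv, hkj, abs_of_nonneg (sub_nonneg.mpr (Nat.cast_le.mpr hkj))]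

lemma integral_partialSups_sum_range_le {X : ℕ → Ω → ℝ} {v : NNReal} (hX : iIndepFun X P)
    (hXm : ∀ i, Measurable (X i)) (hlaw : ∀ i, HasLaw (X i) (gaussianReal 0 v) P) (n : ℕ) :
    ∫ ω, partialSups (fun k ↦ ∑ i ∈ Finset.range k, X i ω) n ∂P ≤ √(2 * (n * v) / π) := by
  have := hX.isProbabilityMeasure
  have hG (i : ℕ) := (hlaw i).hasGaussianLaw
  have hsymm (i : ℕ) : IdentDistrib (X i) (-X i) P P :=
    (hlaw i).identDistrib (by simpa using gaussianReal_neg (hlaw i))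
  have hvar := variance_sum_range_sub_sum_range hX (fun i ↦ (hG i).memLp_two)
    (fun i ↦ (hlaw i).variance_eq.trans variance_id_gaussianReal) n 0
  simp only [Finset.range_zero, Finset.sum_empty, sub_zero, Nat.cast_zero, Nat.abs_cast] at hvar
  refine (integral_partialSups_le_integral_abs hX hXm (fun i ↦ (hG i).integrable) hsymm n).trans_eq
    ?_
  rw [integral_abs_of_hasGaussianLaw ((isGaussianProcess_sum_range hX hG).hasGaussianLaw_eval n)
    (integral_eq_zero_of_identDistrib_neg (identDistrib_neg_sum_range hX hsymm n)), hvar]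

theorem integral_partialSups_le_sqrt_of_variance_sub_le {X : ℕ → Ω → ℝ}
    (hX : IsGaussianProcess X P) {n : ℕ} (hX0 : ∀ k ≤ n, ∫ ω, X k ω ∂P = 0) {v : NNReal}
    (hvar : ∀ j ≤ n, ∀ k ≤ n, Var[fun ω ↦ X j ω - X k ω; P] ≤ |(j : ℝ) - k| * v) :
    ∫ ω, partialSups (X · ω) n ∂P ≤ √(2 * (n * v) / π) := by
  have := hX.isProbabilityMeasure
  obtain ⟨Ω', _, Q, Z, hZm, hZlaw, hZ, _⟩ := exists_iid ℕ (gaussianReal 0 v)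
  have hG (i : ℕ) := (hZlaw i).hasGaussianLaw
  have hS := isGaussianProcess_sum_range hZ hG
  have hZ0 (i : ℕ) : ∫ ω, Z i ω ∂Q = 0 := (hZlaw i).integral_eq.trans integral_id_gaussianReal
  refine le_trans ?_ (integral_partialSups_sum_range_le hZ hZm hZlaw n)
  simp only [partialSups_eq_ciSup_Iic]
  refine integral_iSup_le_integral_iSup_of_variance_sub_le
    (hasGaussianLaw_of_isGaussianProcess (hX.restrict (Set.Iic n)))
    (hasGaussianLaw_of_isGaussianProcess (hS.restrict (Set.Iic n)))
    (fun k ↦ hX0 k k.2) (fun k ↦ ?_) fun j k ↦ ?_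
  · simp [integral_finsetSum _ fun i _ ↦ (hG i).integrable, hZ0]
  · exact (hvar j j.2 k k.2).trans_eq (variance_sum_range_sub_sum_range hZ
      (fun i ↦ (hG i).memLp_two)
      (fun i ↦ (hZlaw i).variance_eq.trans variance_id_gaussianReal) j k).symm

end GaussianWalk

section Fatou

variable {Ω : Type*} [MeasurableSpace Ω] {P : Measure Ω}

lemma lintegral_ofReal_le_of_tendsto {f : ℕ → Ω → ℝ} {F : Ω → ℝ}
    {C : ℝ} (hf : ∀ n, Integrable (f n) P) (hf0 : ∀ n, 0 ≤ᵐ[P] f n)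
    (hfC : ∀ n, ∫ ω, f n ω ∂P ≤ C)
    (hF : ∀ᵐ ω ∂P, Tendsto (f · ω) atTop (nhds (F ω))) :
    ∫⁻ ω, ENNReal.ofReal (F ω) ∂P ≤ ENNReal.ofReal C :=
  calc ∫⁻ ω, ENNReal.ofReal (F ω) ∂P
      = ∫⁻ ω, liminf (fun n ↦ ENNReal.ofReal (f n ω)) atTop ∂P := by
        refine lintegral_congr_ae (hF.mono fun ω hω ↦ ?_)
        exact (ENNReal.tendsto_ofReal hω).liminf_eq.symm
    _ ≤ liminf (fun n ↦ ∫⁻ ω, ENNReal.ofReal (f n ω) ∂P) atTop :=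
        lintegral_liminf_le' fun n ↦ (hf n).aemeasurable.ennreal_ofReal
    _ ≤ ENNReal.ofReal C := by
        refine liminf_le_of_frequently_le' (Frequently.of_forall fun n ↦ ?_)
        rw [← ofReal_integral_eq_lintegral_ofReal (hf n) (hf0 n)]
        exact ENNReal.ofReal_le_ofReal (hfC n)

theorem integrable_and_integral_le_of_tendsto {f : ℕ → Ω → ℝ} {F : Ω → ℝ}
    {C : ℝ} (hf : ∀ n, Integrable (f n) P) (hf0 : ∀ n, 0 ≤ᵐ[P] f n)
    (hfC : ∀ n, ∫ ω, f n ω ∂P ≤ C)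
    (hF : ∀ᵐ ω ∂P, Tendsto (f · ω) atTop (nhds (F ω))) :
    Integrable F P ∧ ∫ ω, F ω ∂P ≤ C := by
  have hlint := lintegral_ofReal_le_of_tendsto hf hf0 hfC hF
  have hC : 0 ≤ C := (integral_nonneg_of_ae (hf0 0)).trans (hfC 0)
  have hF0 : 0 ≤ᵐ[P] F := by
    filter_upwards [hF, ae_all_iff.mpr hf0] with ω hω h0
    exact ge_of_tendsto' hω h0
  have hFm : AEStronglyMeasurable F P :=
    aestronglyMeasurable_of_tendsto_ae atTop (fun n ↦ (hf n).aestronglyMeasurable) hF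
  refine ⟨⟨hFm, ?_⟩, ?_⟩
  · exact (hasFiniteIntegral_iff_ofReal hF0).mpr (hlint.trans_lt ENNReal.ofReal_lt_top)
  · rw [integral_eq_lintegral_of_nonneg_ae hF0 hFm]
    exact ENNReal.toReal_le_of_le_ofReal hC hlint

end Fatou

section ContinuousPaths

lemma div_natCast_mem_Icc {k n : ℕ} (hk : k ≤ n) : (k / n : ℝ) ∈ Icc 0 1 :=
  ⟨by positivity, div_le_one_of_le₀ (Nat.cast_le.mpr hk) n.cast_nonneg⟩

lemma tendsto_partialSups_div {f : ℝ → ℝ} (hf : ContinuousOn f (Icc 0 1)) :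
    Tendsto (fun n : ℕ ↦ partialSups (fun k : ℕ ↦ f (k / n)) n) atTop
      (nhds (sSup (f '' Icc 0 1))) := by
  obtain ⟨s, hs, hmax⟩ := isCompact_Icc.exists_isMaxOn (nonempty_Icc.mpr zero_le_one) hf
  have hsup : sSup (f '' Icc 0 1) = f s :=
    IsGreatest.csSup_eq ⟨mem_image_of_mem f hs, forall_mem_image.mpr hmax⟩
  have hfloor (n : ℕ) : ⌊s * n⌋₊ ≤ n :=
    Nat.floor_le_of_le (mul_le_of_le_one_left n.cast_nonneg hs.2)
  have happrox : Tendsto (fun n : ℕ ↦ f (⌊s * n⌋₊ / n)) atTop (nhds (f s)) :=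
    (hf s hs).tendsto.comp <| tendsto_nhdsWithin_iff.mpr
      ⟨(tendsto_nat_floor_mul_div_atTop hs.1).comp tendsto_natCast_atTop_atTop,
        .of_forall fun n ↦ div_natCast_mem_Icc (hfloor n)⟩
  rw [hsup]
  refine tendsto_of_tendsto_of_tendsto_of_le_of_le happrox tendsto_const_nhds (fun n ↦ ?_)
    fun n ↦ ?_
  · exact le_partialSups_of_le (fun k : ℕ ↦ f (k / n)) (hfloor n)
  · exact partialSups_le _ _ _ fun k hk ↦ hmax (div_natCast_mem_Icc hk)

lemma le_sSup_image_Icc {f : ℝ → ℝ} (hf : ContinuousOn f (Icc 0 1)) {t : ℝ}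
    (ht : t ∈ Icc (0 : ℝ) 1) : f t ≤ sSup (f '' Icc 0 1) :=
  le_csSup (isCompact_Icc.image_of_continuousOn hf).bddAbove (mem_image_of_mem f ht)

variable {Ω : Type*} [MeasurableSpace Ω] {P : Measure Ω} {X : ℝ → Ω → ℝ}

lemma integral_partialSups_div_le (hX : IsGaussianProcess X P)
    (hX0 : ∀ t ∈ Icc (0 : ℝ) 1, ∫ ω, X t ω ∂P = 0) {v : NNReal}
    (hvar : ∀ s ∈ Icc (0 : ℝ) 1, ∀ t ∈ Icc (0 : ℝ) 1,
      Var[fun ω ↦ X s ω - X t ω; P] ≤ |s - t| * v) (n : ℕ) :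
    ∫ ω, partialSups (fun k : ℕ ↦ X (k / n) ω) n ∂P ≤ √(2 * v / π) := by
  have hgrid {k : ℕ} (hk : k ≤ n) := div_natCast_mem_Icc hk
  have hle := integral_partialSups_le_sqrt_of_variance_sub_le (n := n) (v := v / n)
    (hX.comp_right fun k : ℕ ↦ (k / n : ℝ)) (fun k hk ↦ hX0 _ (hgrid hk)) fun j hj k hk ↦
      (hvar _ (hgrid hj) _ (hgrid hk)).trans_eq ?_
  · refine hle.trans (Real.sqrt_le_sqrt ?_)
    gcongr
    rw [NNReal.coe_div, NNReal.coe_natCast, ← mul_div_assoc, mul_div_right_comm]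
    exact mul_le_of_le_one_left v.coe_nonneg (div_self_le_one _)
  · rw [← sub_div, abs_div, Nat.abs_cast, NNReal.coe_div, NNReal.coe_natCast, div_mul_eq_mul_div,
      mul_div_assoc]

theorem integrable_sSup_and_integral_sSup_le (hX : IsGaussianProcess X P)
    (hX0 : ∀ t ∈ Icc (0 : ℝ) 1, ∫ ω, X t ω ∂P = 0)
    (hcont : ∀ ω, ContinuousOn (X · ω) (Icc 0 1)) {v : NNReal}
    (hvar : ∀ s ∈ Icc (0 : ℝ) 1, ∀ t ∈ Icc (0 : ℝ) 1,
      Var[fun ω ↦ X s ω - X t ω; P] ≤ |s - t| * v) :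
    Integrable (fun ω ↦ sSup ((X · ω) '' Icc 0 1)) P ∧
      ∫ ω, sSup ((X · ω) '' Icc 0 1) ∂P ≤ √(2 * v / π) := by
  have hXint (t : ℝ) : Integrable (X t) P := (hX.hasGaussianLaw_eval t).integrable
  have hX00 : ∫ ω, X 0 ω ∂P = 0 := hX0 0 (left_mem_Icc.mpr zero_le_one)
  have hgrid (n : ℕ) := integrable_partialSups (fun k : ℕ ↦ hXint (k / n)) n
  have hgrid0 (n : ℕ) (ω : Ω) :
      0 ≤ partialSups (fun k : ℕ ↦ X (k / n) ω) n - X 0 ω := by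
    simpa using le_partialSups_of_le (fun k : ℕ ↦ X (k / n) ω) n.zero_le
  have hgridle (n : ℕ) :
      ∫ ω, partialSups (fun k : ℕ ↦ X (k / n) ω) n - X 0 ω ∂P ≤ √(2 * v / π) := by
    rw [integral_sub (hgrid n) (hXint 0), hX00, sub_zero]
    exact integral_partialSups_div_le hX hX0 hvar n
  obtain ⟨hint, hle⟩ := integrable_and_integral_le_of_tendsto (fun n ↦ (hgrid n).sub (hXint 0))
    (fun n ↦ ae_of_all _ (hgrid0 n)) hgridle
    (ae_of_all _ fun ω ↦ (tendsto_partialSups_div (hcont ω)).sub_const (X 0 ω))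
  have hsup : Integrable (fun ω ↦ sSup ((X · ω) '' Icc 0 1)) P := by
    simpa only [Pi.add_def, sub_add_cancel] using hint.add (hXint 0)
  rw [integral_sub hsup (hXint 0), hX00, sub_zero] at hle
  exact ⟨hsup, hle⟩

theorem sqrt_variance_sub_le_integral_sSup (hX : IsGaussianProcess X P)
    (hX0 : ∀ t ∈ Icc (0 : ℝ) 1, ∫ ω, X t ω ∂P = 0)
    (hcont : ∀ ω, ContinuousOn (X · ω) (Icc 0 1))
    (hint : Integrable (fun ω ↦ sSup ((X · ω) '' Icc 0 1)) P)
    {s t : ℝ} (hs : s ∈ Icc (0 : ℝ) 1) (ht : t ∈ Icc (0 : ℝ) 1) :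
    √(2 * Var[fun ω ↦ X s ω - X t ω; P] / π) / 2 ≤ ∫ ω, sSup ((X · ω) '' Icc 0 1) ∂P := by
  have := hX.isProbabilityMeasure
  have hXint (t : ℝ) : Integrable (X t) P := (hX.hasGaussianLaw_eval t).integrable
  have hincr : HasGaussianLaw (fun ω ↦ X s ω - X t ω) P := hX.hasGaussianLaw_fun_sub
  have hincr0 : ∫ ω, X s ω - X t ω ∂P = 0 := by
    rw [integral_sub (hXint s) (hXint t), hX0 s hs, hX0 t ht, sub_zero]
  have hmax := two_mul_integral_max_sub hincr.integrable hincr0 0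
  simp only [sub_zero, integral_abs_of_hasGaussianLaw hincr hincr0] at hmax
  have hle (ω : Ω) : max (X s ω - X t ω) 0 ≤ sSup ((X · ω) '' Icc 0 1) - X t ω :=
    max_le (sub_le_sub_right (le_sSup_image_Icc (hcont ω) hs) _)
      (sub_nonneg.mpr (le_sSup_image_Icc (hcont ω) ht))
  have hmono := integral_mono hincr.integrable.pos_part (hint.sub (hXint t)) hle
  rw [integral_sub' hint (hXint t), hX0 t ht] at hmono
  linarith

end ContinuousPaths

lemma sqrt_two_mul_rpow_div_pi {a : ℝ} (ha : 0 ≤ a) (H : ℝ) :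
    √(2 * a ^ (2 * H) / π) = √2 * a ^ H / √π := by
  rw [mul_comm 2 H, Real.rpow_mul ha, Real.rpow_two, Real.sqrt_div (by positivity),
    Real.sqrt_mul zero_le_two, Real.sqrt_sq (by positivity)]

lemma fbmSup_eq_sSup_image_Icc_zero_one {Ω : Type*} (B : ℝ → Ω → ℝ) {a : ℝ} (ha : 0 < a) (ω : Ω) :
    fbmSup B a ω = sSup ((fun u ↦ B (a * u) ω) '' Icc 0 1) := by
  have hIcc : Icc 0 a = (a * ·) '' Icc 0 1 := by simp [image_mul_left_Icc' ha]
  rw [fbmSup, hIcc, image_image]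

section FractionalBrownianMotion

variable {Ω : Type*} [MeasurableSpace Ω] {P : Measure Ω} {H : ℝ} {B : ℝ → Ω → ℝ}

lemma IsFBM.isGaussianProcess (hB : IsFBM P H B) : IsGaussianProcess B P := by
  refine ⟨fun I ↦ ⟨isGaussian_of_map_eq_gaussianReal fun L ↦ ⟨0, ?_⟩⟩⟩
  obtain ⟨v, hv⟩ := hB.gaussian I.card (fun k ↦ I.equivFin.symm k)
    fun k ↦ L fun j ↦ if I.equivFin.symm k = j then 1 else 0
  have hcomb (y : I → ℝ) : L y = ∑ k : Fin I.card,
      (L fun j ↦ if I.equivFin.symm k = j then 1 else 0) * y (I.equivFin.symm k) := by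
    refine (L.toLinearMap.pi_apply_eq_sum_univ y).trans ?_
    rw [← I.equivFin.symm.sum_comp]
    simp only [smul_eq_mul, mul_comm, ContinuousLinearMap.coe_coe]
  refine ⟨v, ?_⟩
  have hmeas : Measurable fun ω ↦ I.restrict (B · ω) :=
    measurable_pi_lambda _ fun i ↦ hB.measurable i
  rw [Measure.map_map L.continuous.measurable hmeas, ← hv]
  congr 1
  ext ω
  exact hcomb _

lemma IsFBM.integral_eq_zero (hB : IsFBM P H B) (t : ℝ) : ∫ ω, B t ω ∂P = 0 := by
  obtain ⟨v, hv⟩ := hB.gaussian 1 (fun _ ↦ t) 1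
  have hlaw : HasLaw (B t) (gaussianReal 0 v) P :=
    ⟨(hB.measurable t).aemeasurable, by simpa using hv⟩
  exact hlaw.integral_eq.trans integral_id_gaussianReal

lemma IsFBM.variance_sub (hB : IsFBM P H B) (hH : 0 < H) {s t : ℝ} (hs : 0 ≤ s) (ht : 0 ≤ t) :
    Var[fun ω ↦ B s ω - B t ω; P] = |s - t| ^ (2 * H) := by
  have := hB.isGaussianProcess.isProbabilityMeasure
  have hL2 (r : ℝ) : MemLp (B r) 2 P := (hB.isGaussianProcess.hasGaussianLaw_eval r).memLp_two
  have hcov {p q : ℝ} (hp : 0 ≤ p) (hq : 0 ≤ q) :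
      cov[B p, B q; P] = (p ^ (2 * H) + q ^ (2 * H) - |q - p| ^ (2 * H)) / 2 := by
    rw [covariance_eq_sub (hL2 p) (hL2 q), hB.integral_eq_zero p, zero_mul, sub_zero]
    exact hB.cov p q hp hq
  have hvar {p : ℝ} (hp : 0 ≤ p) : Var[B p; P] = p ^ (2 * H) := by
    rw [← covariance_self (hL2 p).aemeasurable, hcov hp hp, sub_self, abs_zero,
      Real.zero_rpow (by positivity), sub_zero, add_self_div_two]
  rw [variance_fun_sub (hL2 s) (hL2 t), hcov hs ht, hvar hs, hvar ht, abs_sub_comm]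
  ring

lemma IsFBM.variance_sub_le (hB : IsFBM P H B) (hH : 1 / 2 ≤ H) {a : ℝ} (ha : 0 ≤ a) {s t : ℝ}
    (hs : s ∈ Icc (0 : ℝ) 1) (ht : t ∈ Icc (0 : ℝ) 1) :
    Var[fun ω ↦ B (a * s) ω - B (a * t) ω; P] ≤ |s - t| * a ^ (2 * H) := by
  have hst : |s - t| ≤ 1 := by
    simpa using abs_sub_le_of_le_of_le hs.1 hs.2 ht.1 ht.2
  rw [hB.variance_sub (by linarith) (mul_nonneg ha hs.1) (mul_nonneg ha ht.1), ← mul_sub, abs_mul,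
    abs_of_nonneg ha, Real.mul_rpow ha (abs_nonneg _), mul_comm]
  gcongr
  exact Real.rpow_le_self_of_le_one (abs_nonneg _) hst (by linarith)

end FractionalBrownianMotion

theorem expected_sup_bounds {Ω : Type*} [MeasurableSpace Ω] (P : Measure Ω)
    [IsProbabilityMeasure P] (H a : ℝ) (B : ℝ → Ω → ℝ)
    (hH : H ∈ Set.Ico (1/2 : ℝ) 1) (ha : 0 < a) (hB : IsFBM P H B) :
    Real.sqrt 2 * a ^ H / (2 * Real.sqrt π) ≤ ∫ ω, fbmSup B a ω ∂P ∧
      ∫ ω, fbmSup B a ω ∂P ≤ Real.sqrt 2 * a ^ H / Real.sqrt π := by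
  have hX : IsGaussianProcess (fun u ↦ B (a * u)) P := hB.isGaussianProcess.comp_right (a * ·)
  have hX0 (t : ℝ) (_ : t ∈ Icc (0 : ℝ) 1) : ∫ ω, B (a * t) ω ∂P = 0 := hB.integral_eq_zero (a * t)
  have hcont (ω : Ω) : ContinuousOn (fun u ↦ B (a * u) ω) (Icc 0 1) :=
    ((hB.cont ω).comp (continuous_const_mul a)).continuousOn
  obtain ⟨hint, hupper⟩ := integrable_sSup_and_integral_sSup_le hX hX0 hcont
    (v := ⟨a ^ (2 * H), by positivity⟩) fun s hs t ht ↦ hB.variance_sub_le hH.1 ha.le hs ht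
  have hvar : Var[fun ω ↦ B (a * 1) ω - B (a * 0) ω; P] = a ^ (2 * H) := by
    rw [mul_one, mul_zero, hB.variance_sub (by linarith [hH.1]) ha.le le_rfl, sub_zero,
      abs_of_pos ha]
  have hlower := sqrt_variance_sub_le_integral_sSup hX hX0 hcont hint
    (right_mem_Icc.mpr zero_le_one) (left_mem_Icc.mpr zero_le_one)
  simp only [fbmSup_eq_sSup_image_Icc_zero_one B ha, mul_comm 2 √π, ← div_div,
    ← sqrt_two_mul_rpow_div_pi ha.le]
  refine ⟨?_, hupper⟩
  rwa [hvar] at hlower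
end

section
/- For the maximum loss $M^{H,-}_a$ of fractional Brownian motion and any $y>0$, the tail probability satisfies $P(M^{H,-}_a > y) \le P(R^H_a \ge y) \le \frac{2\sqrt{2}\,a^H}{y\sqrt{\pi}}$. -/
open MeasureTheory ProbabilityTheory Real Set Filter

/-!
The increments of fractional Brownian motion with `H ≥ 1/2` over disjoint intervals are
nonnegatively correlated, because `x ↦ x ^ (2 * H)` is convex on `[0, ∞)`. For a centered Gaussian
vector `X` with `C i j = cov[X i, X j] ≥ 0` for `i ≠ j`, the matrix `L = diagonal (∑ j, C i j) - C`
is a weighted graph Laplacian, hence positive semidefinite. Adding independent `N(0, L)` noise to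
`X` yields independent coordinates whose sum has the same variance as `∑ i, X i`, while by Jensen's
inequality the expected maximum of the partial sums can only grow. For independent symmetric steps
Lévy's reflection argument bounds the expected maximum by the mean absolute value of the sum, which
is `√2 * σ / √π` for a centered Gaussian of variance `σ ^ 2`. Applied to the increments over uniform
grids, Fatou's lemma gives this bound with `σ = a ^ H` for the expected supremum of `B`, and by
symmetry for that of `-B`. Hence the expected range is at most `2 * √2 * a ^ H / √π`, and the
maximum loss is at most the range, so Markov's inequality concludes.
-/

section Symmetrization

variable {G : Type*} [MeasurableSpace G]

lemma lintegral_add_comp_neg [InvolutiveNeg G] [MeasurableNeg G] {μ : Measure G}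
    [μ.IsNegInvariant] {f : G → ENNReal} (hf : Measurable f) :
    ∫⁻ x, (f x + f (-x)) ∂μ = 2 * ∫⁻ x, f x ∂μ := by
  rw [lintegral_add_left hf, lintegral_neg_eq_self, two_mul]

lemma lintegral_ofReal_abs_of_odd [InvolutiveNeg G] [MeasurableNeg G] {μ : Measure G}
    [μ.IsNegInvariant] {f : G → ℝ} (hf : Measurable f) (hodd : ∀ x, f (-x) = -f x) :
    ∫⁻ x, ENNReal.ofReal |f x| ∂μ = 2 * ∫⁻ x, ENNReal.ofReal (f x) ∂μ := by
  rw [← lintegral_add_comp_neg hf.ennreal_ofReal]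
  refine lintegral_congr fun x => ?_
  rcases le_total 0 (f x) with h | h
  · rw [hodd, abs_of_nonneg h, ENNReal.ofReal_of_nonpos (neg_nonpos.2 h), add_zero]
  · rw [hodd, abs_of_nonpos h, ENNReal.ofReal_of_nonpos h, zero_add]

lemma lintegral_le_lintegral_conv [AddGroup G] [MeasurableAdd₂ G] [MeasurableNeg G]
    (μ ν : Measure G) [IsProbabilityMeasure ν] [ν.IsNegInvariant]
    {f : G → ENNReal} (hf : Measurable f) (hmid : ∀ x y, 2 * f x ≤ f (x + y) + f (x - y)) :
    ∫⁻ x, f x ∂μ ≤ ∫⁻ x, f x ∂(μ ∗ ν) := by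
  rw [Measure.lintegral_conv hf]
  refine lintegral_mono fun x => ?_
  rw [← ENNReal.mul_le_mul_iff_right two_ne_zero ENNReal.ofNat_ne_top]
  calc 2 * f x = ∫⁻ _, 2 * f x ∂ν := by simp
    _ ≤ ∫⁻ y, (f (x + y) + f (x + -y)) ∂ν :=
        lintegral_mono fun y => by simpa only [sub_eq_add_neg] using hmid x y
    _ = 2 * ∫⁻ y, f (x + y) ∂ν := lintegral_add_comp_neg (hf.comp (measurable_const_add x))

end Symmetrization

section MaxPartialSum

variable {n : ℕ}

/-- The maximum `max (0, d₀, d₀ + d₁, …, d₀ + ⋯ + dₙ₋₁)` of the partial sums of a finite sequence,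
the empty sum included: the discrete analogue of the running supremum of a path started at `0`. -/
noncomputable def maxPartialSum (d : Fin n → ℝ) : ℝ :=
  ⨆ k, Fin.partialSum d k

lemma partialSum_le_maxPartialSum (d : Fin n → ℝ) (k : Fin (n + 1)) :
    Fin.partialSum d k ≤ maxPartialSum d :=
  le_ciSup (finite_range _).bddAbove k

lemma maxPartialSum_nonneg (d : Fin n → ℝ) : 0 ≤ maxPartialSum d := by
  simpa using partialSum_le_maxPartialSum d 0

lemma maxPartialSum_fin_zero (d : Fin 0 → ℝ) : maxPartialSum d = 0 := by
  simp [maxPartialSum]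

lemma maxPartialSum_cons (x : ℝ) (d : Fin n → ℝ) :
    maxPartialSum (Fin.cons x d : Fin (n + 1) → ℝ) = max 0 (x + maxPartialSum d) := by
  apply le_antisymm
  · refine ciSup_le fun k => ?_
    cases k using Fin.cases with
    | zero => simp
    | succ k => simp [Fin.partialSum_succ', partialSum_le_maxPartialSum d k]
  · refine max_le (maxPartialSum_nonneg _) (le_sub_iff_add_le'.1 (ciSup_le fun k => ?_))
    have h := partialSum_le_maxPartialSum (Fin.cons x d : Fin (n + 1) → ℝ) k.succ
    simp only [Fin.partialSum_succ', Fin.cons_zero, Fin.tail_cons] at h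
    linarith

@[fun_prop]
lemma measurable_maxPartialSum : Measurable (maxPartialSum (n := n)) := by
  refine Measurable.iSup fun k => ?_
  induction k using Fin.induction with
  | zero => simp
  | succ k ih => simp only [Fin.partialSum_succ]; exact ih.add (measurable_pi_apply k)

lemma partialSum_succ_sub_castSucc {G : Type*} [AddCommGroup G] (g : Fin (n + 1) → G)
    (k : Fin (n + 1)) :
    Fin.partialSum (fun i : Fin n => g i.succ - g i.castSucc) k = g k - g 0 := by
  induction k using Fin.induction with
  | zero => simp
  | succ k ih => rw [Fin.partialSum_succ, ih]; abel

lemma maxPartialSum_increments (g : Fin (n + 1) → ℝ) :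
    maxPartialSum (fun i => g i.succ - g i.castSucc) = ⨆ k, (g k - g 0) := by
  simp only [maxPartialSum, partialSum_succ_sub_castSucc]

lemma partialSum_add {M : Type*} [AddCommMonoid M] (u z : Fin n → M) (k : Fin (n + 1)) :
    Fin.partialSum (u + z) k = Fin.partialSum u k + Fin.partialSum z k := by
  induction k using Fin.induction with
  | zero => simp
  | succ k ih => simp only [Fin.partialSum_succ, ih, Pi.add_apply]; abel

lemma two_mul_maxPartialSum_le (u z : Fin n → ℝ) :
    2 * maxPartialSum u ≤ maxPartialSum (u + z) + maxPartialSum (u - z) := by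
  refine (Real.mul_iSup_of_nonneg zero_le_two _).trans_le (ciSup_le fun k => ?_)
  have hu : Fin.partialSum u k = Fin.partialSum (u - z) k + Fin.partialSum z k := by
    rw [← partialSum_add, sub_add_cancel]
  linarith [partialSum_add u z k, partialSum_le_maxPartialSum (u + z) k,
    partialSum_le_maxPartialSum (u - z) k]

end MaxPartialSum

section LevyInequality

lemma lintegral_ofReal_abs_add_le {G : Type*} [MeasurableSpace G] [InvolutiveNeg G]
    [MeasurableNeg G] {μ : Measure G} [IsProbabilityMeasure μ] [μ.IsNegInvariant] {f : G → ℝ}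
    (hf : Measurable f) (hodd : ∀ x, f (-x) = -f x) {c : ℝ} (hc : 0 ≤ c) :
    ∫⁻ x, ENNReal.ofReal |f x| ∂μ + ENNReal.ofReal c ≤ 2 * ∫⁻ x, ENNReal.ofReal (f x + c) ∂μ := by
  have pointwise (r : ℝ) : ENNReal.ofReal |r| + ENNReal.ofReal c ≤
      ENNReal.ofReal (r + c) + ENNReal.ofReal (-r + c) := by
    rw [← ENNReal.ofReal_add (abs_nonneg r) hc]
    rcases abs_choice r with h | h <;> rw [h]
    exacts [le_self_add, le_add_self]
  calc ∫⁻ x, ENNReal.ofReal |f x| ∂μ + ENNReal.ofReal c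
      = ∫⁻ x, (ENNReal.ofReal |f x| + ENNReal.ofReal c) ∂μ := by
        rw [lintegral_add_right _ measurable_const, lintegral_const, measure_univ, mul_one]
    _ ≤ ∫⁻ x, (ENNReal.ofReal (f x + c) + ENNReal.ofReal (f (-x) + c)) ∂μ :=
        lintegral_mono fun x => by simpa only [hodd] using pointwise (f x)
    _ = 2 * ∫⁻ x, ENNReal.ofReal (f x + c) ∂μ := lintegral_add_comp_neg (by fun_prop)

variable {n : ℕ}

lemma lintegral_pi_fin_succ {α : Fin (n + 1) → Type*} [∀ i, MeasurableSpace (α i)]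
    (μ : ∀ i, Measure (α i)) [∀ i, SigmaFinite (μ i)] {F : (∀ i, α i) → ENNReal}
    (hF : Measurable F) :
    ∫⁻ d, F d ∂Measure.pi μ =
      ∫⁻ x, ∫⁻ d, F (Fin.cons x d) ∂Measure.pi (fun i : Fin n => μ i.succ) ∂μ 0 := by
  have h := (measurePreserving_piFinSuccAbove μ 0).symm
  rw [← h.lintegral_comp hF,
    lintegral_prod (fun z => F ((MeasurableEquiv.piFinSuccAbove α 0).symm z))
      (hF.comp h.measurable).aemeasurable]
  simp only [MeasurableEquiv.piFinSuccAbove_symm_apply, Fin.insertNthEquiv_zero]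
  rfl

-- Induction on the first step `x`: before level `c` is passed the hypothesis applies at the level
-- `c - x`; once it is passed, the remaining sum is symmetric and may be reflected.
lemma lintegral_ofReal_maxPartialSum_sub_le (μ : Fin n → Measure ℝ)
    [∀ i, IsProbabilityMeasure (μ i)] [∀ i, (μ i).IsNegInvariant] {c : ℝ} (hc : 0 ≤ c) :
    ∫⁻ d, ENNReal.ofReal (maxPartialSum d - c) ∂Measure.pi μ ≤
      2 * ∫⁻ d, ENNReal.ofReal (∑ i, d i - c) ∂Measure.pi μ := by
  induction n generalizing c with
  | zero => simp [maxPartialSum_fin_zero, ENNReal.ofReal_of_nonpos (neg_nonpos.2 hc)]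
  | succ n ih =>
    rw [lintegral_pi_fin_succ μ (by fun_prop), lintegral_pi_fin_succ μ (by fun_prop),
      ← lintegral_const_mul' _ _ ENNReal.ofNat_ne_top]
    refine lintegral_mono fun x => ?_
    set ν : Measure (Fin n → ℝ) := Measure.pi fun i => μ i.succ
    have drop_zero (m : ℝ) : ENNReal.ofReal (max 0 (x + m) - c) = ENNReal.ofReal (m - (c - x)) := by
      rw [← max_sub_sub_right, ENNReal.ofReal_max, ENNReal.ofReal_of_nonpos (by linarith),
        max_eq_right zero_le, sub_sub_eq_add_sub, add_comm m]
    have shift_sum (m : ℝ) : x + m - c = m - (c - x) := by ring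
    simp only [maxPartialSum_cons, Fin.sum_univ_succ, Fin.cons_zero, Fin.cons_succ, drop_zero,
      shift_sum]
    rcases le_total x c with hx | hx
    · exact ih _ (sub_nonneg.2 hx)
    calc ∫⁻ d, ENNReal.ofReal (maxPartialSum d - (c - x)) ∂ν
        = ∫⁻ d, ENNReal.ofReal (maxPartialSum d - 0) ∂ν + ENNReal.ofReal (x - c) := by
          rw [← mul_one (ENNReal.ofReal (x - c)), ← measure_univ (μ := ν), ← lintegral_const,
            ← lintegral_add_left (by fun_prop)]
          refine lintegral_congr fun d => ?_
          rw [← ENNReal.ofReal_add (by simpa using maxPartialSum_nonneg d) (sub_nonneg.2 hx),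
            sub_zero, sub_eq_add_neg _ (c - x), neg_sub]
      _ ≤ ∫⁻ d, ENNReal.ofReal |∑ i, d i| ∂ν + ENNReal.ofReal (x - c) := by
          refine add_le_add ?_ le_rfl
          rw [lintegral_ofReal_abs_of_odd (by fun_prop) (by simp)]
          simpa only [sub_zero] using ih (fun i => μ i.succ) le_rfl
      _ ≤ 2 * ∫⁻ d, ENNReal.ofReal (∑ i, d i - (c - x)) ∂ν := by
          simpa only [sub_eq_add_neg _ (c - x), neg_sub] using
            lintegral_ofReal_abs_add_le (μ := ν) (f := fun d => ∑ i, d i) (by fun_prop)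
              (by simp) (sub_nonneg.2 hx)

lemma lintegral_ofReal_maxPartialSum_le (μ : Fin n → Measure ℝ)
    [∀ i, IsProbabilityMeasure (μ i)] [∀ i, (μ i).IsNegInvariant] :
    ∫⁻ d, ENNReal.ofReal (maxPartialSum d) ∂Measure.pi μ ≤
      ∫⁻ d, ENNReal.ofReal |∑ i, d i| ∂Measure.pi μ := by
  rw [lintegral_ofReal_abs_of_odd (by fun_prop) (by simp)]
  simpa only [sub_zero] using lintegral_ofReal_maxPartialSum_sub_le μ le_rfl

end LevyInequality

section Gaussian

instance isNegInvariant_gaussianReal_zero (v : NNReal) : (gaussianReal 0 v).IsNegInvariant :=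
  ⟨by rw [Measure.neg_def, gaussianReal_map_neg, neg_zero]⟩

lemma map_sum_pi_gaussianReal {ι : Type*} [Fintype ι] (m : ι → ℝ) (v : ι → NNReal) :
    (Measure.pi fun i => gaussianReal (m i) (v i)).map (fun d => ∑ i, d i) =
      gaussianReal (∑ i, m i) (∑ i, v i) := by
  refine Measure.ext_of_charFun (funext fun t => ?_)
  rw [charFun_map_sum_pi_eq_prod]
  simp only [charFun_gaussianReal, Finset.prod_apply, ← Complex.exp_sum]
  push_cast
  simp only [Finset.sum_sub_distrib, Finset.sum_div, Finset.sum_mul, Finset.mul_sum]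

lemma integral_abs_gaussianReal_zero (v : NNReal) :
    ∫ x, |x| ∂gaussianReal 0 v = √2 * √v / √π := by
  rcases eq_or_ne v 0 with rfl | hv
  · simp
  have half_line : ∫ x in Ioi (0 : ℝ), x * rexp (-(1 / (2 * v)) * x ^ 2) = v := by
    have h := integral_rpow_mul_exp_neg_mul_rpow (p := 2) (q := 1) (b := 1 / (2 * v)) two_pos
      (by norm_num) (by positivity)
    norm_num [rpow_neg_one, mul_comm (2 : ℝ)] at h
    simpa [mul_comm (2 : ℝ)] using h
  have density (x : ℝ) : gaussianPDFReal 0 v x • |x| =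
      (√(2 * π * v))⁻¹ * (|x| * rexp (-(1 / (2 * v)) * |x| ^ 2)) := by
    rw [gaussianPDFReal, smul_eq_mul, sub_zero, sq_abs, neg_mul, one_div_mul_eq_div, neg_div]
    ring
  have hv' : (v : ℝ) = √v * √v := (mul_self_sqrt v.2).symm
  simp_rw [integral_gaussianReal_eq_integral_smul hv, density]
  rw [integral_comp_abs (f := fun x => (√(2 * π * v))⁻¹ * (x * rexp (-(1 / (2 * v)) * x ^ 2))),
    integral_const_mul, half_line, sqrt_mul (by positivity), sqrt_mul zero_le_two]
  have : 0 < √(v : ℝ) := by positivity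
  field_simp
  nlinarith [mul_self_sqrt (zero_le_two (α := ℝ)), mul_self_sqrt v.2]

variable {ι : Type*} [Fintype ι] [DecidableEq ι] {S T : Matrix ι ι ℝ}

lemma multivariateGaussian_conv (m m' : EuclideanSpace ℝ ι) (hS : S.PosSemidef)
    (hT : T.PosSemidef) :
    multivariateGaussian m S ∗ multivariateGaussian m' T =
      multivariateGaussian (m + m') (S + T) := by
  refine Measure.ext_of_charFun (funext fun t => ?_)
  rw [charFun_conv, charFun_multivariateGaussian hS, charFun_multivariateGaussian hT,
    charFun_multivariateGaussian (hS.add hT), ← Complex.exp_add, inner_add_right, Matrix.add_mulVec,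
    dotProduct_add]
  push_cast
  ring_nf

lemma multivariateGaussian_diagonal (m : EuclideanSpace ℝ ι) (v : ι → NNReal) :
    multivariateGaussian m (Matrix.diagonal fun i => (v i : ℝ)) =
      (Measure.pi fun i => gaussianReal (m i) (v i)).map (WithLp.toLp 2) := by
  refine Measure.ext_of_charFun (funext fun t => ?_)
  rw [charFun_multivariateGaussian (Matrix.PosSemidef.diagonal fun i => (v i).coe_nonneg),
    charFun_pi]
  simp only [charFun_gaussianReal, ← Complex.exp_sum, PiLp.inner_apply, dotProduct,
    Matrix.mulVec_diagonal, RCLike.inner_apply, conj_trivial]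
  push_cast
  simp only [Finset.sum_sub_distrib, Finset.sum_div, Finset.sum_mul]
  congr 2 <;> exact Finset.sum_congr rfl fun i _ => by ring

lemma isNegInvariant_multivariateGaussian_zero (hS : S.PosSemidef) :
    (multivariateGaussian 0 S).IsNegInvariant := by
  constructor
  rw [Measure.neg_def]
  refine Measure.ext_of_charFun (funext fun t => ?_)
  rw [show (Neg.neg : EuclideanSpace ℝ ι → _) = ((-1 : ℝ) • ·) by ext1; simp, charFun_map_smul]
  simp only [charFun_multivariateGaussian hS, inner_zero_right, neg_smul, one_smul,
    WithLp.ofLp_neg, Matrix.mulVec_neg, neg_dotProduct_neg]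

lemma lintegral_multivariateGaussian_mono (m : EuclideanSpace ℝ ι) (hS : S.PosSemidef)
    (hST : (T - S).PosSemidef) {f : EuclideanSpace ℝ ι → ENNReal} (hf : Measurable f)
    (hmid : ∀ x y, 2 * f x ≤ f (x + y) + f (x - y)) :
    ∫⁻ x, f x ∂multivariateGaussian m S ≤ ∫⁻ x, f x ∂multivariateGaussian m T := by
  have decomposition := multivariateGaussian_conv m 0 hS hST
  rw [add_zero, add_sub_cancel] at decomposition
  rw [← decomposition]
  have := isNegInvariant_multivariateGaussian_zero hST
  exact lintegral_le_lintegral_conv _ _ hf hmid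

end Gaussian

section Covariance

variable {ι : Type*}

lemma posSemidef_diagonal_sum_sub [Fintype ι] [DecidableEq ι] {C : Matrix ι ι ℝ} (hC : C.IsSymm)
    (hnonneg : Pairwise fun i j => 0 ≤ C i j) :
    (Matrix.diagonal (fun i => ∑ j, C i j) - C).PosSemidef := by
  refine .of_dotProduct_mulVec_nonneg
    ((Matrix.isHermitian_diagonal _).sub (Matrix.isHermitian_iff_isSymm.2 hC)) fun x => ?_
  have swap : ∑ i, ∑ j, C i j * x j ^ 2 = ∑ i, ∑ j, C i j * x i ^ 2 := by
    rw [Finset.sum_comm]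
    simp only [hC.apply]
  have dirichlet_form : x ⬝ᵥ ((Matrix.diagonal (fun i => ∑ j, C i j) - C).mulVec x) =
      (∑ i, ∑ j, C i j * (x i - x j) ^ 2) / 2 := by
    have expand : ∑ i, ∑ j, C i j * (x i - x j) ^ 2 = ∑ i, ∑ j, C i j * x i ^ 2 +
        ∑ i, ∑ j, C i j * x j ^ 2 - 2 * ∑ i, ∑ j, x i * (C i j * x j) := by
      simp only [Finset.mul_sum, ← Finset.sum_add_distrib, ← Finset.sum_sub_distrib]
      exact Finset.sum_congr rfl fun i _ => Finset.sum_congr rfl fun j _ => by ring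
    have diagonal_part : ∑ i, x i * ((∑ j, C i j) * x i) = ∑ i, ∑ j, C i j * x i ^ 2 := by
      simp only [Finset.sum_mul, Finset.mul_sum]
      exact Finset.sum_congr rfl fun i _ => Finset.sum_congr rfl fun j _ => by ring
    rw [expand, swap, Matrix.sub_mulVec, dotProduct_sub]
    simp only [dotProduct, Matrix.mulVec_diagonal, diagonal_part]
    simp only [Matrix.mulVec, dotProduct, ← Finset.mul_sum]
    ring
  rw [star_trivial, dirichlet_form]
  refine div_nonneg (Finset.sum_nonneg fun i _ => Finset.sum_nonneg fun j _ => ?_) zero_le_two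
  rcases eq_or_ne i j with rfl | hij
  · simp
  · exact mul_nonneg (hnonneg hij) (sq_nonneg _)

variable {Ω : Type*} [MeasurableSpace Ω] {P : Measure Ω} {X : ι → Ω → ℝ}

/-- The covariance matrix of a finite family of real random variables, with entries given by
`ProbabilityTheory.covariance`. -/
noncomputable def covarianceMatrix (X : ι → Ω → ℝ) (P : Measure Ω) : Matrix ι ι ℝ :=
  Matrix.of fun i j => cov[X i, X j; P]

lemma covarianceMatrix_apply (i j : ι) : covarianceMatrix X P i j = cov[X i, X j; P] := rfl

lemma isSymm_covarianceMatrix : (covarianceMatrix X P).IsSymm :=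
  Matrix.ext fun _ _ => covariance_comm _ _

lemma covarianceBilin_map_toLp [Fintype ι] [IsFiniteMeasure P] (hX : ∀ i, MemLp (X i) 2 P)
    (x y : EuclideanSpace ℝ ι) :
    covarianceBilin (P.map fun ω => WithLp.toLp 2 (X · ω)) x y =
      x ⬝ᵥ (covarianceMatrix X P).mulVec y := by
  simp only [covarianceBilin_apply_pi hX, dotProduct, Matrix.mulVec, Finset.mul_sum,
    covarianceMatrix_apply]
  exact Finset.sum_congr rfl fun i _ => Finset.sum_congr rfl fun j _ => by ring

lemma posSemidef_covarianceMatrix [Finite ι] [IsFiniteMeasure P] (hX : ∀ i, MemLp (X i) 2 P) :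
    (covarianceMatrix X P).PosSemidef := by
  have := Fintype.ofFinite ι
  refine .of_dotProduct_mulVec_nonneg (Matrix.isHermitian_iff_isSymm.2 isSymm_covarianceMatrix)
    fun x => ?_
  have h := covarianceBilin_map_toLp hX (WithLp.toLp 2 x) (WithLp.toLp 2 x)
  rw [star_trivial, ← h]
  exact isPosSemidef_covarianceBilin.nonneg _

lemma map_toLp_eq_multivariateGaussian [Fintype ι] [DecidableEq ι]
    (hX : HasGaussianLaw (fun ω i => X i ω) P) :
    P.map (fun ω => WithLp.toLp 2 (X · ω)) =
      multivariateGaussian (WithLp.toLp 2 fun i => P[X i]) (covarianceMatrix X P) := by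
  have := hX.isProbabilityMeasure
  have hLp (i : ι) : MemLp (X i) 2 P := (hX.eval i).memLp_two
  have := (hX.toLp_pi 2).isGaussian_map
  refine IsGaussian.ext ?_ ?_
  · rw [integral_id_multivariateGaussian', integral_map (hX.toLp_pi 2).aemeasurable (by fun_prop)]
    ext i
    exact eval_integral_piLp (fun i => (hX.eval i).integrable) i
  · ext x y
    rw [covarianceBilin_map_toLp hLp,
      covarianceBilin_multivariateGaussian (posSemidef_covarianceMatrix hLp)]

end Covariance

section DiscreteMaximalInequality

lemma lintegral_abs_sum_pi_gaussianReal_zero {ι : Type*} [Fintype ι] (v : ι → NNReal) :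
    ∫⁻ d, ENNReal.ofReal |∑ i, d i| ∂Measure.pi (fun i => gaussianReal 0 (v i)) =
      ENNReal.ofReal (√2 * √(∑ i, v i : NNReal) / √π) := by
  have law := map_sum_pi_gaussianReal (fun _ : ι => 0) v
  rw [Finset.sum_const_zero] at law
  rw [← integral_abs_gaussianReal_zero, ofReal_integral_eq_lintegral_ofReal
    IsGaussian.integrable_fun_id.abs (ae_of_all _ fun _ => abs_nonneg _), ← law,
    lintegral_map (by fun_prop) (by fun_prop)]

variable {Ω : Type*} [MeasurableSpace Ω] {P : Measure Ω} {n : ℕ}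
  {X : Fin n → Ω → ℝ}

lemma lintegral_maxPartialSum_le_pi_gaussianReal
    (hX : HasGaussianLaw (fun ω i => X i ω) P) (hmean : ∀ i, P[X i] = 0)
    (hcov : Pairwise fun i j => 0 ≤ cov[X i, X j; P]) {v : Fin n → NNReal}
    (hv : ∀ i, (v i : ℝ) = ∑ j, cov[X i, X j; P]) :
    ∫⁻ ω, ENNReal.ofReal (maxPartialSum (X · ω)) ∂P ≤
      ∫⁻ d, ENNReal.ofReal (maxPartialSum d) ∂Measure.pi fun i => gaussianReal 0 (v i) := by
  have := hX.isProbabilityMeasure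
  have hLp (i : Fin n) : MemLp (X i) 2 P := (hX.eval i).memLp_two
  let f (x : EuclideanSpace ℝ (Fin n)) : ENNReal := ENNReal.ofReal (maxPartialSum x)
  have hf : Measurable f := by fun_prop
  have hmid (x y : EuclideanSpace ℝ (Fin n)) : 2 * f x ≤ f (x + y) + f (x - y) :=
    calc 2 * f x = ENNReal.ofReal (2 * maxPartialSum x) := by simp [f, ENNReal.ofReal_mul]
      _ ≤ ENNReal.ofReal (maxPartialSum (x + y).ofLp + maxPartialSum (x - y).ofLp) :=
        ENNReal.ofReal_le_ofReal (two_mul_maxPartialSum_le _ _)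
      _ ≤ f (x + y) + f (x - y) := ENNReal.ofReal_add_le
  have law := map_toLp_eq_multivariateGaussian hX
  simp only [hmean] at law
  have laplacian := posSemidef_diagonal_sum_sub (isSymm_covarianceMatrix (X := X) (P := P)) hcov
  simp only [covarianceMatrix_apply, ← hv] at laplacian
  calc ∫⁻ ω, ENNReal.ofReal (maxPartialSum (X · ω)) ∂P
      = ∫⁻ x, f x ∂multivariateGaussian 0 (covarianceMatrix X P) := by
        rw [← WithLp.toLp_zero, Pi.zero_def, ← law,
          lintegral_map' hf.aemeasurable (hX.toLp_pi 2).aemeasurable]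
    _ ≤ ∫⁻ x, f x ∂multivariateGaussian 0 (Matrix.diagonal fun i => (v i : ℝ)) :=
        lintegral_multivariateGaussian_mono 0 (posSemidef_covarianceMatrix hLp) laplacian hf hmid
    _ = ∫⁻ d, ENNReal.ofReal (maxPartialSum d) ∂Measure.pi fun i => gaussianReal 0 (v i) := by
        rw [multivariateGaussian_diagonal, lintegral_map hf (by fun_prop)]
        rfl

lemma lintegral_maxPartialSum_le_of_pairwise_covariance_nonneg
    (hX : HasGaussianLaw (fun ω i => X i ω) P) (hmean : ∀ i, P[X i] = 0)
    (hcov : Pairwise fun i j => 0 ≤ cov[X i, X j; P]) :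
    ∫⁻ ω, ENNReal.ofReal (maxPartialSum (X · ω)) ∂P ≤
      ENNReal.ofReal (√2 * √Var[∑ i, X i; P] / √π) := by
  have := hX.isProbabilityMeasure
  have hLp (i : Fin n) : MemLp (X i) 2 P := (hX.eval i).memLp_two
  have row_sum_nonneg (i : Fin n) : 0 ≤ ∑ j, cov[X i, X j; P] := by
    refine Finset.sum_nonneg fun j _ => ?_
    rcases eq_or_ne i j with rfl | hij
    · exact (variance_nonneg _ _).trans_eq (covariance_self (hLp i).aemeasurable).symm
    · exact hcov hij
  let v (i : Fin n) : NNReal := ⟨∑ j, cov[X i, X j; P], row_sum_nonneg i⟩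
  have variance_sum_eq : Var[∑ i, X i; P] = (∑ i, v i : NNReal) := by
    rw [variance_sum hLp, NNReal.coe_sum]
    rfl
  rw [variance_sum_eq, ← lintegral_abs_sum_pi_gaussianReal_zero]
  exact (lintegral_maxPartialSum_le_pi_gaussianReal hX hmean hcov fun _ => rfl).trans
    (lintegral_ofReal_maxPartialSum_le _)

end DiscreteMaximalInequality

section UniformGrid

open scoped Topology

/-- The grid `0, a / n, 2 * a / n, …, a` of `n + 1` points on `[0, a]`; the junk case `n = 0` is the
single point `0`. -/
noncomputable def uniformGrid (a : ℝ) (n : ℕ) (k : Fin (n + 1)) : ℝ :=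
  a * (k / n)

lemma uniformGrid_zero (a : ℝ) (n : ℕ) : uniformGrid a n 0 = 0 := by
  simp [uniformGrid]

lemma uniformGrid_last (a : ℝ) {n : ℕ} (hn : n ≠ 0) : uniformGrid a n (Fin.last n) = a := by
  simp [uniformGrid, hn]

variable {a : ℝ}

lemma monotone_uniformGrid (ha : 0 ≤ a) (n : ℕ) : Monotone (uniformGrid a n) := by
  intro j k hjk
  have : (j : ℕ) ≤ k := hjk
  unfold uniformGrid
  gcongr

lemma uniformGrid_mem_Icc (ha : 0 ≤ a) {n : ℕ} (k : Fin (n + 1)) :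
    uniformGrid a n k ∈ Icc 0 a := by
  have hk : (k : ℝ) ≤ n := by exact_mod_cast Nat.lt_succ_iff.1 k.2
  exact ⟨by unfold uniformGrid; positivity,
    mul_le_of_le_one_right ha (div_le_one_of_le₀ hk n.cast_nonneg)⟩

lemma exists_tendsto_uniformGrid {t : ℝ} (ht : t ∈ Icc 0 a) :
    ∃ k : ∀ n, Fin (n + 1), Tendsto (fun n => uniformGrid a n (k n)) atTop (𝓝 t) := by
  have ha : 0 ≤ a := ht.1.trans ht.2
  have floor_le (n : ℕ) : ⌊t / a * n⌋₊ ≤ n :=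
    Nat.floor_le_of_le (mul_le_of_le_one_left n.cast_nonneg (div_le_one_of_le₀ ht.2 ha))
  refine ⟨fun n => ⟨⌊t / a * n⌋₊, Nat.lt_succ_iff.2 (floor_le n)⟩, ?_⟩
  have h := ((tendsto_nat_floor_mul_div_atTop (div_nonneg ht.1 ha)).comp
    tendsto_natCast_atTop_atTop).const_mul a
  rwa [mul_div_cancel_of_imp' fun h : a = 0 => le_antisymm (h ▸ ht.2) ht.1] at h

/-- The approximation of `sup_{0 ≤ t ≤ a} (f t - f 0)` by the maximum over `uniformGrid a n`,
expressed through the increments of `f` along the grid. -/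
noncomputable def gridMaxRise (f : ℝ → ℝ) (a : ℝ) (n : ℕ) : ℝ :=
  maxPartialSum fun i : Fin n => f (uniformGrid a n i.succ) - f (uniformGrid a n i.castSucc)

lemma gridMaxRise_eq_iSup (f : ℝ → ℝ) (a : ℝ) (n : ℕ) :
    gridMaxRise f a n = ⨆ k, (f (uniformGrid a n k) - f 0) := by
  rw [gridMaxRise, maxPartialSum_increments fun k => f (uniformGrid a n k), uniformGrid_zero]

lemma tendsto_gridMaxRise {f : ℝ → ℝ} (ha : 0 ≤ a) (hf : ContinuousOn f (Icc 0 a)) :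
    Tendsto (gridMaxRise f a) atTop (𝓝 (sSup (f '' Icc 0 a) - f 0)) := by
  obtain ⟨t, ht, hsup⟩ := isCompact_Icc.exists_sSup_image_eq (nonempty_Icc.2 ha) hf
  obtain ⟨k, hk⟩ := exists_tendsto_uniformGrid ht
  have hlim : Tendsto (fun n => f (uniformGrid a n (k n))) atTop (𝓝 (f t)) :=
    (hf t ht).tendsto.comp (tendsto_nhdsWithin_iff.2
      ⟨hk, Eventually.of_forall fun n => uniformGrid_mem_Icc ha (k n)⟩)
  rw [hsup]
  refine tendsto_of_tendsto_of_tendsto_of_le_of_le (hlim.sub_const (f 0)) tendsto_const_nhds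
    (fun n => ?_) fun n => ?_ <;> rw [gridMaxRise_eq_iSup]
  · exact le_ciSup (f := fun k => f (uniformGrid a n k) - f 0) (finite_range _).bddAbove (k n)
  · refine ciSup_le fun k => sub_le_sub_right ?_ _
    rw [← hsup]
    exact le_csSup (isCompact_Icc.image_of_continuousOn hf).bddAbove
      (mem_image_of_mem f (uniformGrid_mem_Icc ha k))

end UniformGrid

section NonnegCorrelatedIncrements

variable {Ω : Type*} [MeasurableSpace Ω] {P : Measure Ω}

/-- The increments of `X` over any two non-overlapping intervals with endpoints in `I` are
nonnegatively correlated. Only the outermost endpoints are required to lie in `I`, which is meant to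
be order-connected. -/
def HasNonnegCorrelatedIncrements {T : Type*} [Preorder T] (X : T → Ω → ℝ) (P : Measure Ω)
    (I : Set T) : Prop :=
  ∀ ⦃s t u v⦄, s ∈ I → v ∈ I → s ≤ t → t ≤ u → u ≤ v → 0 ≤ cov[X t - X s, X v - X u; P]

lemma HasNonnegCorrelatedIncrements.neg {T : Type*} [Preorder T] {X : T → Ω → ℝ} {I : Set T}
    (hX : HasNonnegCorrelatedIncrements X P I) : HasNonnegCorrelatedIncrements (-X) P I :=
  fun s t u v hs hv hst htu huv => by
    simpa only [Pi.neg_apply, neg_sub_neg, ← neg_sub (X _) (X s), ← neg_sub (X v),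
      covariance_neg_left, covariance_neg_right, neg_neg] using hX hs hv hst htu huv

lemma lintegral_maxPartialSum_increments_le {T : Type*} [Preorder T] {X : T → Ω → ℝ} {I : Set T}
    (hX : IsGaussianProcess X P) (hmean : ∀ t, P[X t] = 0)
    (hcov : HasNonnegCorrelatedIncrements X P I) {n : ℕ} {t : Fin (n + 1) → T} (ht : Monotone t)
    (hI : ∀ k, t k ∈ I) :
    ∫⁻ ω, ENNReal.ofReal (maxPartialSum fun i => X (t i.succ) ω - X (t i.castSucc) ω) ∂P ≤
      ENNReal.ofReal (√2 * √Var[X (t (Fin.last n)) - X (t 0); P] / √π) := by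
  have increments_cov {i j : Fin n} (hij : i < j) :
      0 ≤ cov[X (t i.succ) - X (t i.castSucc), X (t j.succ) - X (t j.castSucc); P] :=
    hcov (hI _) (hI _) (ht i.castSucc_le_succ) (ht (Fin.succ_le_castSucc_iff.2 hij))
      (ht j.castSucc_le_succ)
  have increments_sum :
      ∑ i : Fin n, (X (t i.succ) - X (t i.castSucc)) = X (t (Fin.last n)) - X (t 0) := by
    rw [← partialSum_succ_sub_castSucc (fun k => X (t k)) (Fin.last n),
      Fin.partialSum, List.take_of_length_le (by simp), List.sum_ofFn]
  rw [← increments_sum]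
  refine lintegral_maxPartialSum_le_of_pairwise_covariance_nonneg hX.hasGaussianLaw_increments
    (fun i => ?_) fun i j hij => ?_
  · rw [integral_sub (hX.hasGaussianLaw_eval _).integrable (hX.hasGaussianLaw_eval _).integrable,
      hmean, hmean, sub_zero]
  · rcases hij.lt_or_gt with h | h
    · exact increments_cov h
    · rw [covariance_comm]
      exact increments_cov h

end NonnegCorrelatedIncrements

section RunningSupremum

variable {Ω : Type*} {B : ℝ → Ω → ℝ} {a : ℝ} {ω : Ω}

lemma fbmInf_eq_neg_fbmSup_neg (B : ℝ → Ω → ℝ) (a : ℝ) (ω : Ω) :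
    fbmInf B a ω = -fbmSup (-B) a ω := by
  rw [fbmInf, Real.sInf_def, fbmSup, ← image_neg_eq_neg, image_image]
  rfl

lemma fbmMaxLoss_le_fbmSup_sub_fbmInf (ha : 0 ≤ a) (hB : ContinuousOn (B · ω) (Icc 0 a)) :
    fbmMaxLoss B a ω ≤ fbmSup B a ω - fbmInf B a ω := by
  have hK := isCompact_Icc.image_of_continuousOn hB
  refine csSup_le ⟨0, 0, 0, le_rfl, le_rfl, ha, by simp⟩ ?_
  rintro x ⟨u, v, hu, huv, hva, rfl⟩
  exact sub_le_sub (le_csSup hK.bddAbove (mem_image_of_mem _ ⟨hu, huv.trans hva⟩))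
    (csInf_le hK.bddBelow (mem_image_of_mem _ ⟨hu.trans huv, hva⟩))

variable [MeasurableSpace Ω] {P : Measure Ω}

lemma aemeasurable_gridMaxRise (hB : ∀ t, AEMeasurable (B t) P) (a : ℝ) (n : ℕ) :
    AEMeasurable (fun ω => gridMaxRise (B · ω) a n) P :=
  measurable_maxPartialSum.comp_aemeasurable <|
    aemeasurable_pi_lambda _ fun _ => (hB _).sub (hB _)

lemma aemeasurable_fbmSup_sub (hmeas : ∀ t, AEMeasurable (B t) P)
    (hcont : ∀ᵐ ω ∂P, ContinuousOn (B · ω) (Icc 0 a)) (ha : 0 ≤ a) :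
    AEMeasurable (fun ω => fbmSup B a ω - B 0 ω) P :=
  aemeasurable_of_tendsto_metrizable_ae atTop
    (aemeasurable_gridMaxRise hmeas a) (hcont.mono fun _ => tendsto_gridMaxRise ha)

lemma lintegral_fbmSup_sub_le (hB : IsGaussianProcess B P) (hmean : ∀ t, P[B t] = 0)
    (hcov : HasNonnegCorrelatedIncrements B P (Icc 0 a))
    (hcont : ∀ᵐ ω ∂P, ContinuousOn (B · ω) (Icc 0 a)) (ha : 0 ≤ a) :
    ∫⁻ ω, ENNReal.ofReal (fbmSup B a ω - B 0 ω) ∂P ≤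
      ENNReal.ofReal (√2 * √Var[B a - B 0; P] / √π) := by
  have grid_bound {n : ℕ} (hn : n ≠ 0) :
      ∫⁻ ω, ENNReal.ofReal (gridMaxRise (B · ω) a n) ∂P ≤
        ENNReal.ofReal (√2 * √Var[B a - B 0; P] / √π) := by
    simpa only [gridMaxRise, uniformGrid_last a hn, uniformGrid_zero] using
      lintegral_maxPartialSum_increments_le hB hmean hcov (monotone_uniformGrid ha n)
        (uniformGrid_mem_Icc ha)
  calc ∫⁻ ω, ENNReal.ofReal (fbmSup B a ω - B 0 ω) ∂P
      = ∫⁻ ω, liminf (fun n => ENNReal.ofReal (gridMaxRise (B · ω) a n)) atTop ∂P :=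
        lintegral_congr_ae <| hcont.mono fun ω hω =>
          ((ENNReal.continuous_ofReal.tendsto _).comp (tendsto_gridMaxRise ha hω)).liminf_eq.symm
    _ ≤ liminf (fun n => ∫⁻ ω, ENNReal.ofReal (gridMaxRise (B · ω) a n) ∂P) atTop :=
        lintegral_liminf_le' fun n => (aemeasurable_gridMaxRise hB.aemeasurable a n).ennreal_ofReal
    _ ≤ ENNReal.ofReal (√2 * √Var[B a - B 0; P] / √π) :=
        liminf_le_of_frequently_le' ((eventually_ne_atTop 0).mono fun _ => grid_bound).frequently

lemma lintegral_fbmSup_sub_fbmInf_le (hB : IsGaussianProcess B P) (hmean : ∀ t, P[B t] = 0)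
    (hcov : HasNonnegCorrelatedIncrements B P (Icc 0 a))
    (hcont : ∀ᵐ ω ∂P, ContinuousOn (B · ω) (Icc 0 a)) (ha : 0 ≤ a) :
    ∫⁻ ω, ENNReal.ofReal (fbmSup B a ω - fbmInf B a ω) ∂P ≤
      ENNReal.ofReal (2 * √2 * √Var[B a - B 0; P] / √π) := by
  have hneg : IsGaussianProcess (-B) P := hB.comp_left fun _ => -ContinuousLinearMap.id ℝ ℝ
  have hneg_mean (t : ℝ) : P[(-B) t] = 0 := by
    rw [Pi.neg_apply, integral_neg', hmean, neg_zero]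
  have hneg_cont : ∀ᵐ ω ∂P, ContinuousOn ((-B) · ω) (Icc 0 a) := hcont.mono fun _ hω => hω.neg
  have hneg_var : Var[(-B) a - (-B) 0; P] = Var[B a - B 0; P] := by
    rw [← variance_neg, Pi.neg_apply, Pi.neg_apply, neg_sub_neg, neg_sub]
  calc ∫⁻ ω, ENNReal.ofReal (fbmSup B a ω - fbmInf B a ω) ∂P
      ≤ ∫⁻ ω, (ENNReal.ofReal (fbmSup B a ω - B 0 ω) +
          ENNReal.ofReal (fbmSup (-B) a ω - (-B) 0 ω)) ∂P := lintegral_mono fun ω => by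
        refine (ENNReal.ofReal_le_ofReal (le_of_eq ?_)).trans ENNReal.ofReal_add_le
        rw [fbmInf_eq_neg_fbmSup_neg, Pi.neg_apply, Pi.neg_apply]
        ring
    _ = ∫⁻ ω, ENNReal.ofReal (fbmSup B a ω - B 0 ω) ∂P +
          ∫⁻ ω, ENNReal.ofReal (fbmSup (-B) a ω - (-B) 0 ω) ∂P :=
        lintegral_add_left'
          (aemeasurable_fbmSup_sub hB.aemeasurable hcont ha).ennreal_ofReal _
    _ ≤ ENNReal.ofReal (√2 * √Var[B a - B 0; P] / √π) +
          ENNReal.ofReal (√2 * √Var[B a - B 0; P] / √π) :=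
        add_le_add (lintegral_fbmSup_sub_le hB hmean hcov hcont ha)
          (hneg_var ▸ lintegral_fbmSup_sub_le hneg hneg_mean hcov.neg hneg_cont ha)
    _ = ENNReal.ofReal (2 * √2 * √Var[B a - B 0; P] / √π) := by
        rw [← ENNReal.ofReal_add (by positivity) (by positivity)]
        congr 1
        ring

lemma aemeasurable_fbmSup_sub_fbmInf (hmeas : ∀ t, AEMeasurable (B t) P)
    (hcont : ∀ᵐ ω ∂P, ContinuousOn (B · ω) (Icc 0 a)) (ha : 0 ≤ a) :
    AEMeasurable (fun ω => fbmSup B a ω - fbmInf B a ω) P := by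
  refine ((aemeasurable_fbmSup_sub hmeas hcont ha).add (aemeasurable_fbmSup_sub (B := -B)
    (fun t => (hmeas t).neg) (hcont.mono fun _ hω => hω.neg) ha)).congr (ae_of_all _ fun ω => ?_)
  simp only [Pi.add_apply, Pi.neg_apply, fbmInf_eq_neg_fbmSup_neg]
  ring

theorem maxLoss_tail_bound_general (hB : IsGaussianProcess B P) (hmean : ∀ t, P[B t] = 0)
    (hcov : HasNonnegCorrelatedIncrements B P (Icc 0 a))
    (hcont : ∀ᵐ ω ∂P, ContinuousOn (B · ω) (Icc 0 a)) (ha : 0 ≤ a) {y : ℝ} (hy : 0 < y) :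
    P {ω | y < fbmMaxLoss B a ω} ≤ P {ω | y ≤ fbmSup B a ω - fbmInf B a ω} ∧
      P {ω | y ≤ fbmSup B a ω - fbmInf B a ω} ≤
        ENNReal.ofReal (2 * √2 * √Var[B a - B 0; P] / (y * √π)) := by
  refine ⟨measure_mono_ae (hcont.mono fun ω hω h =>
    h.le.trans (fbmMaxLoss_le_fbmSup_sub_fbmInf ha hω)), ?_⟩
  calc P {ω | y ≤ fbmSup B a ω - fbmInf B a ω}
      ≤ P {ω | ENNReal.ofReal y ≤ ENNReal.ofReal (fbmSup B a ω - fbmInf B a ω)} :=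
        measure_mono fun _ => ENNReal.ofReal_le_ofReal
    _ ≤ (∫⁻ ω, ENNReal.ofReal (fbmSup B a ω - fbmInf B a ω) ∂P) / ENNReal.ofReal y :=
        meas_ge_le_lintegral_div
          (aemeasurable_fbmSup_sub_fbmInf hB.aemeasurable hcont ha).ennreal_ofReal
          (ENNReal.ofReal_pos.2 hy).ne' ENNReal.ofReal_ne_top
    _ ≤ ENNReal.ofReal (2 * √2 * √Var[B a - B 0; P] / √π) / ENNReal.ofReal y := by
        gcongr
        exact lintegral_fbmSup_sub_fbmInf_le hB hmean hcov hcont ha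
    _ = ENNReal.ofReal (2 * √2 * √Var[B a - B 0; P] / (y * √π)) := by
        rw [← ENNReal.ofReal_div_of_pos hy, div_div, mul_comm (√π)]

end RunningSupremum

lemma convexOn_map_add_map_le {E : Type*} [AddCommGroup E] [Module ℝ E] {s : Set E} {f : E → ℝ}
    (hf : ConvexOn ℝ s f) {p q x y : E} (hp : p ∈ s) (hq : q ∈ s) (hx : x ∈ segment ℝ p q)
    (hxy : x + y = p + q) : f x + f y ≤ f p + f q := by
  obtain ⟨α, β, hα, hβ, hαβ, rfl⟩ := hx
  have hy : y = β • p + α • q := by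
    rw [eq_sub_of_add_eq' hxy, ← one_smul ℝ (p + q), ← hαβ]
    module
  have hx_le := hf.2 hp hq hα hβ hαβ
  have hy_le := hf.2 hp hq hβ hα ((add_comm β α).trans hαβ)
  rw [← hy] at hy_le
  calc f (α • p + β • q) + f y
      ≤ (α • f p + β • f q) + (β • f p + α • f q) := add_le_add hx_le hy_le
    _ = (α + β) * (f p + f q) := by simp only [smul_eq_mul]; ring
    _ = f p + f q := by rw [hαβ, one_mul]

namespace IsFBM

variable {Ω : Type*} [MeasurableSpace Ω] {P : Measure Ω} {H : ℝ} {B : ℝ → Ω → ℝ}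

lemma isGaussianProcess_s3 (hB : IsFBM P H B) : IsGaussianProcess B P where
  hasGaussianLaw I := ⟨isGaussian_of_map_eq_gaussianReal fun L => by
    classical
    have hmeas : Measurable fun ω => I.restrict (B · ω) :=
      measurable_pi_lambda _ fun i => hB.measurable i
    have hL (ω : Ω) : L (I.restrict (B · ω)) =
        ∑ k, L (Pi.single (I.equivFin.symm k) 1) * B (I.equivFin.symm k) ω := by
      rw [I.equivFin.symm.sum_comp fun i => L (Pi.single i 1) * B i ω,
        ← Finset.univ_sum_single (I.restrict (B · ω)), map_sum]
      refine Finset.sum_congr rfl fun i _ => ?_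
      rw [mul_comm, ← smul_eq_mul, ← map_smul, ← Pi.single_smul, smul_eq_mul, mul_one]
      rfl
    obtain ⟨v, hv⟩ := hB.gaussian _ (fun k => I.equivFin.symm k)
      fun k => L (Pi.single (I.equivFin.symm k) 1)
    refine ⟨0, v, ?_⟩
    rw [Measure.map_map L.measurable hmeas, ← hv]
    exact congrArg P.map (funext hL)⟩

lemma integral_eq_zero_s3 (hB : IsFBM P H B) (t : ℝ) : P[B t] = 0 := by
  obtain ⟨v, hv⟩ := hB.gaussian 1 (fun _ => t) fun _ => 1
  simp only [Finset.univ_unique, Finset.sum_singleton, one_mul] at hv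
  calc P[B t] = ∫ x, x ∂P.map (B t) :=
        (integral_map (hB.measurable t).aemeasurable aestronglyMeasurable_id).symm
    _ = 0 := by rw [hv, integral_id_gaussianReal]

lemma covariance_increments (hB : IsFBM P H B) {s t u v : ℝ} (hs : 0 ≤ s) (ht : 0 ≤ t) (hu : 0 ≤ u)
    (hv : 0 ≤ v) :
    cov[B t - B s, B v - B u; P] =
      (|v - s| ^ (2 * H) + |u - t| ^ (2 * H) - |v - t| ^ (2 * H) - |u - s| ^ (2 * H)) / 2 := by
  have := hB.isGaussianProcess_s3.isProbabilityMeasure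
  have hLp (t : ℝ) : MemLp (B t) 2 P := (hB.isGaussianProcess_s3.hasGaussianLaw_eval t).memLp_two
  have hcov {s t : ℝ} (hs : 0 ≤ s) (ht : 0 ≤ t) :
      cov[B s, B t; P] = (s ^ (2 * H) + t ^ (2 * H) - |t - s| ^ (2 * H)) / 2 := by
    rw [covariance_eq_sub (hLp s) (hLp t), hB.integral_eq_zero_s3, zero_mul, sub_zero]
    exact hB.cov s t hs ht
  rw [covariance_sub_sub (hLp t) (hLp s) (hLp v) (hLp u), hcov ht hv, hcov ht hu,
    hcov hs hv, hcov hs hu]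
  ring

lemma hasNonnegCorrelatedIncrements (hB : IsFBM P H B) (hH : 1 / 2 ≤ H) {I : Set ℝ}
    (hI : I ⊆ Ici 0) : HasNonnegCorrelatedIncrements B P I := by
  intro s t u v hs hv hst htu huv
  have hs0 : 0 ≤ s := hI hs
  rw [hB.covariance_increments hs0 (hs0.trans hst) (hs0.trans (hst.trans htu)) (hI hv),
    abs_of_nonneg (by linarith), abs_of_nonneg (by linarith), abs_of_nonneg (by linarith),
    abs_of_nonneg (by linarith)]
  have hmem : v - t ∈ segment ℝ (u - t) (v - s) := by
    rw [segment_eq_Icc (by linarith)]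
    constructor <;> linarith
  have hconv := convexOn_map_add_map_le (convexOn_rpow (by linarith : 1 ≤ 2 * H))
    (mem_Ici.2 (sub_nonneg.2 htu)) (mem_Ici.2 (by linarith : 0 ≤ v - s)) hmem
    (y := u - s) (by ring)
  linarith

lemma sqrt_variance_sub_zero (hB : IsFBM P H B) (hH : H ≠ 0) {a : ℝ} (ha : 0 ≤ a) :
    √Var[B a - B 0; P] = a ^ H := by
  rw [← covariance_self ((hB.measurable a).sub (hB.measurable 0)).aemeasurable,
    hB.covariance_increments le_rfl ha le_rfl ha, sub_zero, zero_sub, abs_neg, sub_self, sub_self,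
    abs_zero, abs_of_nonneg ha, zero_rpow (mul_ne_zero two_ne_zero hH), sub_zero, sub_zero,
    add_self_div_two, mul_comm 2 H, rpow_mul ha, rpow_two,
    sqrt_sq (rpow_nonneg ha H)]

end IsFBM

theorem maxLoss_tail_bound {Ω : Type*} [MeasurableSpace Ω] (P : Measure Ω)
    [IsProbabilityMeasure P] (H a : ℝ) (B : ℝ → Ω → ℝ)
    (hH : H ∈ Set.Ico (1/2 : ℝ) 1) (ha : 0 < a) (hB : IsFBM P H B)
    (y : ℝ) (hy : 0 < y) :
    P {ω | y < fbmMaxLoss B a ω} ≤ P {ω | y ≤ fbmSup B a ω - fbmInf B a ω} ∧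
      P {ω | y ≤ fbmSup B a ω - fbmInf B a ω} ≤
        ENNReal.ofReal (2 * Real.sqrt 2 * a ^ H / (y * Real.sqrt π)) := by
  rw [← hB.sqrt_variance_sub_zero (one_half_pos.trans_le hH.1).ne' ha.le]
  exact maxLoss_tail_bound_general hB.isGaussianProcess_s3 hB.integral_eq_zero_s3
    (hB.hasNonnegCorrelatedIncrements hH.1 Icc_subset_Ici_self)
    (ae_of_all P fun ω => (hB.cont ω).continuousOn) ha.le hy
end
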